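/- Let (R, m) be a Noetherian local ring of dimension t and let x = x_1, ..., x_t be any system of parameters of R. Then R is unmixed if and only if the m-adic topology is equivalent to the topology defined by the family of ideals {(x_1^n, ..., x_t^n)^lim}_{n ≥ 1}; that is, R is unmixed if and only if for every positive integer k there exists n with (x_1^n, ..., x_t^n)^lim ⊆ m^k. -/

import Mathlib

/-!
For a list `xs = [x₁, …, x_t]` and a module `M`, let `L_y M = M_y / im M` and let
`T xs M = L_{x_t} ⋯ L_{x₁} M`; this is the top local cohomology module `H^t_{(x)}(M)`, with elements
`m / (x₁⋯x_t)ⁿ`. The kernel `limJ xs n` of `a ↦ a / (x₁⋯x_t)ⁿ` is the limit closure of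
`x₁ⁿ, …, x_tⁿ` (`limJ_ofFn`), and the intersection of these ideals over all `n` is the annihilator of
`T xs A` (`kills_iff_mem_limJ`). Everything takes place over the completion `A` of `R`, which is
Noetherian, faithfully flat over `R` and of the same dimension `t`.

*Topologies agree implies unmixed.* Suppose `P = Ann c` is an associated prime of `A` with
`dim A/P < t`. Then `T xs (A/P) = 0` (`T_vanish`), so `c`, the image of `1` under `A/P → A`, lies in
every `limJ xs n` (`mem_limJ_of_dim_lt`). These ideals are open, so `c` can be approximated by
elements of `R` lying in the limit closures; those are in high powers of `m`, hence `c = 0`, which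
is absurd.

*Unmixed implies topologies agree.* By Chevalley's theorem (`chevalley`) it is enough that the ideals
`limJ xs n` of `A` have zero intersection. Otherwise the intersection contains some `c ≠ 0` whose
annihilator is an associated prime `P` of `A`, with `dim A/P = t` and `c · T xs A = 0`. This is
refuted in `not_kills_of_dim`. Write `xs = xs' ++ [x]`. Changing the elements of `xs'` by prime
avoidance (`choose_FR`) gives `ys` filter-regular on `B = A/(c)`. From `0 → A/P → A → B → 0` one gets
`T ys (A/P) → T ys A → T ys B → 0`, exact up to `m`-torsion on the left. Since `c` kills
`L_x (T ys A)`, every element of `T (ys ++ [x]) (A/P)` comes, by a connecting correspondence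
(`connect`), from the `m`-torsion of `T ys B`. Let `E` be an injective module with simple socle
(`exists_hull`) and dualise into `E`. The dual of the `m`-torsion of `T ys B` is finitely generated,
and its support meets `V(ys)` at most in `m` (`dual_T`). On the other hand `T (ys ++ [x]) (A/P)` is
nonzero (`T_ne_zero`, Grothendieck nonvanishing) and its dual is torsion-free over `A/P`
(`dual_torsionFree`), so `P` belongs to that support. Hence `P + (ys)` is `m`-primary, and
`dim A/P ≤ t - 1`, a contradiction.
-/

open IsLocalRing

/-- The limit closure `(x)^lim = ⋃_{n>0} ((x₁^{n+1}, …, x_r^{n+1}) :_R (x₁⋯x_r)^n)` of a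
sequence `x = x₁, …, x_r` of elements of `R`; the union of the increasing family of ideals
is expressed as a supremum. -/
def limitClosure {R : Type*} [CommRing R] {M : Type*} [AddCommGroup M] [Module R M]
    {r : ℕ} (x : Fin r → R) : Submodule R M :=
  ⨆ n : ℕ, (Ideal.span (Set.range fun i => x i ^ (n + 2)) • (⊤ : Submodule R M)).comap
    (LinearMap.lsmul R M ((∏ i, x i) ^ (n + 1)))

/-- A system of parameters of a Noetherian local ring `R` of dimension `t`: a sequence of `t`
elements of the maximal ideal generating an ideal primary to the maximal ideal. -/
def IsSOP (R : Type*) [CommRing R] [IsLocalRing R] {t : ℕ} (x : Fin t → R) : Prop :=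
  (∀ i, x i ∈ maximalIdeal R) ∧ (Ideal.span (Set.range x)).radical = maximalIdeal R

/-- A Noetherian local ring `(R, m)` is unmixed if `dim R̂/P = dim R̂` for every associated
prime `P` of the `m`-adic completion `R̂` of `R`. -/
def IsUnmixedLocalRing (R : Type*) [CommRing R] [IsLocalRing R] : Prop :=
  ∀ P ∈ associatedPrimes (AdicCompletion (maximalIdeal R) R)
      (AdicCompletion (maximalIdeal R) R),
    ringKrullDim ((AdicCompletion (maximalIdeal R) R) ⧸ P) =
      ringKrullDim (AdicCompletion (maximalIdeal R) R)

universe u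

/-! ### The quotient `L_y M = M_y / M` -/

section LFunctor
variable {A : Type u} [CommRing A]

/-- The top local cohomology `M_y / im M` of the module `M` along a single element `y`. -/
def Lq (y : A) (M : Type u) [AddCommGroup M] [Module A M] : Type u :=
  LocalizedModule (Submonoid.powers y) M ⧸
    LinearMap.range (LocalizedModule.mkLinearMap (Submonoid.powers y) M)

variable (y : A) (M N B : Type u) [AddCommGroup M] [Module A M] [AddCommGroup N] [Module A N]
  [AddCommGroup B] [Module A B]

noncomputable instance : AddCommGroup (Lq y M) := inferInstanceAs (AddCommGroup (_ ⧸
    LinearMap.range (LocalizedModule.mkLinearMap (Submonoid.powers y) M)))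
noncomputable instance : Module A (Lq y M) := inferInstanceAs (Module A (_ ⧸
    LinearMap.range (LocalizedModule.mkLinearMap (Submonoid.powers y) M)))

variable {M N B}

/-- The power `y ^ n`, as a possible denominator. -/
def den (n : ℕ) : Submonoid.powers y := ⟨y ^ n, n, rfl⟩

/-- The class of the fraction `m / y ^ n` in `Lq y M`. -/
noncomputable def frac (n : ℕ) : M →ₗ[A] Lq y M where
  toFun m := (LinearMap.range (LocalizedModule.mkLinearMap (Submonoid.powers y) M)).mkQ
    (LocalizedModule.mk m (den y n))
  map_add' a b := by
    have : LocalizedModule.mk (a + b) (den y n) =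
        LocalizedModule.mk a (den y n) + LocalizedModule.mk b (den y n) := by
      rw [LocalizedModule.mk_add_mk, LocalizedModule.mk_eq]
      refine ⟨1, ?_⟩
      simp only [Submonoid.smul_def, one_smul, smul_add, smul_smul, Submonoid.coe_mul]
    rw [this, map_add]
    rfl
  map_smul' r a := by
    have : LocalizedModule.mk (r • a) (den y n) = r • LocalizedModule.mk a (den y n) :=
      (LocalizedModule.smul'_mk _ _ _).symm
    rw [this, map_smul]
    rfl

variable {y}

lemma frac_surj (l : Lq y M) : ∃ n m, frac y n m = l := by
  obtain ⟨l, rfl⟩ := Submodule.mkQ_surjective _ l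
  induction l using LocalizedModule.induction_on with
  | h m s =>
    obtain ⟨_, n, rfl⟩ := s
    exact ⟨n, m, rfl⟩

/-- Vanishing of `m / y ^ n` in `M_y / M`, phrased inside `M`. -/
lemma frac_eq_zero_iff (n : ℕ) (m : M) :
    frac y n m = 0 ↔ ∃ j, ∃ m' : M, y ^ j • m = y ^ (j + n) • m' := by
  change (LinearMap.range (LocalizedModule.mkLinearMap (Submonoid.powers y) M)).mkQ
    (LocalizedModule.mk m (den y n)) = 0 ↔ _
  rw [Submodule.mkQ_apply, Submodule.Quotient.mk_eq_zero]
  constructor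
  · rintro ⟨m', hm'⟩
    rw [LocalizedModule.mkLinearMap_apply, LocalizedModule.mk_eq] at hm'
    obtain ⟨⟨_, j, rfl⟩, h⟩ := hm'
    refine ⟨j, m', ?_⟩
    simp only [Submonoid.smul_def, one_smul] at h
    rw [← h, pow_add, mul_smul]
    rfl
  · rintro ⟨j, m', h⟩
    refine ⟨m', ?_⟩
    rw [LocalizedModule.mkLinearMap_apply, LocalizedModule.mk_eq]
    refine ⟨⟨y ^ j, j, rfl⟩, ?_⟩
    simp only [Submonoid.smul_def, one_smul]
    rw [h, pow_add, mul_smul]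
    rfl

lemma frac_add (n k : ℕ) (m : M) : frac y (n + k) (y ^ k • m) = frac y n m := by
  change (LinearMap.range (LocalizedModule.mkLinearMap (Submonoid.powers y) M)).mkQ
      (LocalizedModule.mk _ (den y (n + k))) =
    (LinearMap.range (LocalizedModule.mkLinearMap (Submonoid.powers y) M)).mkQ
      (LocalizedModule.mk _ (den y n))
  congr 1
  rw [LocalizedModule.mk_eq]
  refine ⟨1, ?_⟩
  simp only [Submonoid.smul_def, one_smul, smul_smul]
  congr 1
  change y ^ n * y ^ k = y ^ (n + k)
  ring

/-- Functoriality of `Lq y`. -/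
noncomputable def Lmap (y : A) (f : M →ₗ[A] N) : Lq y M →ₗ[A] Lq y N :=
  Submodule.mapQ (LinearMap.range (LocalizedModule.mkLinearMap (Submonoid.powers y) M))
    (LinearMap.range (LocalizedModule.mkLinearMap (Submonoid.powers y) N))
    (IsLocalizedModule.map (Submonoid.powers y)
      (LocalizedModule.mkLinearMap (Submonoid.powers y) M)
      (LocalizedModule.mkLinearMap (Submonoid.powers y) N) f) (by
      rintro _ ⟨m, rfl⟩
      exact ⟨f m, (IsLocalizedModule.map_apply _ _ _ f m).symm⟩)

@[simp] lemma Lmap_frac (f : M →ₗ[A] N) (n : ℕ) (m : M) :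
    Lmap y f (frac y n m) = frac y n (f m) := by
  change (LinearMap.range (LocalizedModule.mkLinearMap (Submonoid.powers y) N)).mkQ
      (IsLocalizedModule.map _ _ _ f (LocalizedModule.mk m (den y n))) =
    (LinearMap.range (LocalizedModule.mkLinearMap (Submonoid.powers y) N)).mkQ
      (LocalizedModule.mk (f m) (den y n))
  congr 1
  exact IsLocalizedModule.map_LocalizedModules _ f _ _

/-- Every element of `Lq y M` has a representative with any sufficiently large denominator. -/
lemma frac_surj_ge (l : Lq y M) : ∃ n₀, ∀ n ≥ n₀, ∃ m, frac y n m = l := by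
  obtain ⟨n, m, rfl⟩ := frac_surj l
  refine ⟨n, fun k hk => ⟨y ^ (k - n) • m, ?_⟩⟩
  obtain ⟨d, rfl⟩ := Nat.exists_eq_add_of_le hk
  simpa using frac_add n d m

lemma frac_zero (m : M) : frac y 0 m = 0 := (frac_eq_zero_iff 0 m).2 ⟨0, m, rfl⟩

lemma pow_smul_frac (n : ℕ) (m : M) : y ^ n • frac y n m = 0 := by
  rw [← map_smul]
  simpa using (frac_add 0 n m).trans (frac_zero m)

lemma Lq_nilp (l : Lq y M) : ∃ n, y ^ n • l = 0 := by
  obtain ⟨n, m, rfl⟩ := frac_surj l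
  exact ⟨n, pow_smul_frac n m⟩

lemma Lq_smul_surj (l : Lq y M) : ∃ l', y • l' = l := by
  obtain ⟨n, m, rfl⟩ := frac_surj l
  refine ⟨frac y (n + 1) m, ?_⟩
  rw [← map_smul]
  simpa using frac_add n 1 m

/-- The kernel of `y` on `Lq y M` consists of the fractions with denominator `y`. -/
lemma Lq_ker_smul (l : Lq y M) (h : y • l = 0) : ∃ m, frac y 1 m = l := by
  obtain ⟨n, m, rfl⟩ := frac_surj l
  rw [← map_smul, frac_eq_zero_iff] at h
  obtain ⟨j, m', h⟩ := h
  refine ⟨m', ?_⟩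
  rw [← sub_eq_zero, ← frac_add 1 n m', add_comm 1 n, ← frac_add n 1 m, ← map_sub,
    frac_eq_zero_iff]
  refine ⟨j, 0, ?_⟩
  rw [smul_sub, pow_one, h, smul_smul, ← pow_add]
  simp

lemma Lmap_surj {f : M →ₗ[A] N} (hf : Function.Surjective f) :
    Function.Surjective (Lmap y f) := by
  intro l
  obtain ⟨n, m, rfl⟩ := frac_surj l
  obtain ⟨m, rfl⟩ := hf m
  exact ⟨frac y n m, Lmap_frac f n m⟩

/-- Half of the right exactness of `Lq y`. -/
lemma Lmap_exact {f : N →ₗ[A] M} {g : M →ₗ[A] B} (h : Function.Exact f g)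
    (hg : Function.Surjective g) : Function.Exact (Lmap y f) (Lmap y g) := by
  intro l
  constructor
  · intro hl
    obtain ⟨n, m, rfl⟩ := frac_surj l
    rw [Lmap_frac, frac_eq_zero_iff] at hl
    obtain ⟨j, b, hb⟩ := hl
    obtain ⟨m', rfl⟩ := hg b
    rw [← map_smul, ← map_smul, ← sub_eq_zero, ← map_sub] at hb
    obtain ⟨k, hk⟩ := (h _).1 hb
    refine ⟨frac y (n + j) k, ?_⟩
    rw [Lmap_frac, hk, map_sub, frac_add, add_comm j n, map_smul, pow_smul_frac, sub_zero]
  · rintro ⟨l, rfl⟩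
    obtain ⟨n, m, rfl⟩ := frac_surj l
    rw [Lmap_frac, Lmap_frac, h.apply_apply_eq_zero, map_zero]

lemma Lmap_comp (f : M →ₗ[A] N) (g : N →ₗ[A] B) (l : Lq y M) :
    Lmap y (g.comp f) l = Lmap y g (Lmap y f l) := by
  obtain ⟨n, m, rfl⟩ := frac_surj l
  simp

lemma Lmap_smul_id (c : A) : Lmap y (c • (LinearMap.id : M →ₗ[A] M)) = c • LinearMap.id := by
  ext l
  obtain ⟨n, m, rfl⟩ := frac_surj l
  simp

lemma Lq_mem_smul_top (I : Ideal A) (l : Lq y M) (hl : l ∈ (I • ⊤ : Submodule A (Lq y M))) :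
    ∃ n₀, ∀ n ≥ n₀, ∃ m ∈ (I • ⊤ : Submodule A M), frac y n m = l := by
  induction hl using Submodule.smul_induction_on' with
  | smul r hr l _ =>
    obtain ⟨n₀, h⟩ := frac_surj_ge l
    refine ⟨n₀, fun n hn => ?_⟩
    obtain ⟨m, rfl⟩ := h n hn
    exact ⟨r • m, Submodule.smul_mem_smul hr trivial, map_smul _ _ _⟩
  | add a _ b _ ha hb =>
    obtain ⟨n₁, h₁⟩ := ha
    obtain ⟨n₂, h₂⟩ := hb
    refine ⟨max n₁ n₂, fun n hn => ?_⟩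
    obtain ⟨m₁, hm₁, rfl⟩ := h₁ n (le_trans (le_max_left _ _) hn)
    obtain ⟨m₂, hm₂, rfl⟩ := h₂ n (le_trans (le_max_right _ _) hn)
    exact ⟨m₁ + m₂, add_mem hm₁ hm₂, map_add _ _ _⟩

end LFunctor

/-! ### The top local cohomology module as an iterated quotient -/

section TFunctor
variable {A : Type u} [CommRing A]

/-- The iterated functor `M ↦ L_{y_r} (⋯ (L_{y_1} M))`, a model of the top local cohomology of
`M` along the list `y_1, …, y_r`. -/
noncomputable def T : List A → ModuleCat.{u} A → ModuleCat.{u} A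
  | [], M => M
  | y :: ys, M => T ys (ModuleCat.of A (Lq y M))

/-- Functoriality of `T ys`. -/
noncomputable def Tmap : (ys : List A) → {M N : ModuleCat.{u} A} → (M →ₗ[A] N) →
    (T ys M →ₗ[A] T ys N)
  | [], _, _, f => f
  | y :: ys, M, N, f =>
    Tmap ys (M := ModuleCat.of A (Lq y M)) (N := ModuleCat.of A (Lq y N)) (Lmap y f)

lemma T_append (xs ys : List A) (M : ModuleCat.{u} A) : T (xs ++ ys) M = T ys (T xs M) := by
  induction xs generalizing M with
  | nil => rfl
  | cons x xs ih => exact ih _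

variable {M N B : ModuleCat.{u} A}

lemma Tmap_surj (ys : List A) {f : M →ₗ[A] N} (hf : Function.Surjective f) :
    Function.Surjective (Tmap ys f) := by
  induction ys generalizing M N with
  | nil => exact hf
  | cons y ys ih => exact ih (Lmap_surj hf)

lemma Tmap_exact (ys : List A) {f : N →ₗ[A] M} {g : M →ₗ[A] B} (h : Function.Exact f g)
    (hg : Function.Surjective g) : Function.Exact (Tmap ys f) (Tmap ys g) := by
  induction ys generalizing M N B with
  | nil => exact h
  | cons y ys ih => exact ih (Lmap_exact h hg) (Lmap_surj hg)

lemma Tmap_comp (ys : List A) (f : M →ₗ[A] N) (g : N →ₗ[A] B) :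
    Tmap ys (g.comp f) = (Tmap ys g).comp (Tmap ys f) := by
  induction ys generalizing M N B with
  | nil => rfl
  | cons y ys ih =>
    have h : Lmap y (g.comp f) = (Lmap y g).comp (Lmap y f) := by
      ext l; exact Lmap_comp f g l
    change Tmap ys (M := ModuleCat.of A (Lq y M)) (N := ModuleCat.of A (Lq y B))
      (Lmap y (g.comp f)) = _
    rw [h]
    exact ih (M := ModuleCat.of A (Lq y M)) (N := ModuleCat.of A (Lq y N))
      (B := ModuleCat.of A (Lq y B)) (Lmap y f) (Lmap y g)

lemma Tmap_smul_id (ys : List A) (c : A) (u : T ys M) :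
    Tmap ys (c • (LinearMap.id : M →ₗ[A] M)) u = c • u := by
  induction ys generalizing M with
  | nil => rfl
  | cons y ys ih =>
    change Tmap ys (M := ModuleCat.of A (Lq y M)) (N := ModuleCat.of A (Lq y M))
      (Lmap y (c • LinearMap.id)) u = _
    rw [Lmap_smul_id]
    exact ih (M := ModuleCat.of A (Lq y M)) u

/-- The ideal generated by the `k`-th powers of the members of a list. -/
def pw (xs : List A) (k : ℕ) : Ideal A := Ideal.span ((fun x => x ^ k) '' {x | x ∈ xs})

lemma pw_cons (y : A) (ys : List A) (k : ℕ) :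
    pw (y :: ys) k = Ideal.span {y ^ k} ⊔ pw ys k := by
  unfold pw
  rw [← Ideal.span_union]
  congr 1
  ext z
  simp [eq_comm]

lemma prod_pow_smul_mem (ys : List A) (a d : ℕ) (m : M)
    (hm : m ∈ (pw ys a • ⊤ : Submodule A M)) :
    ys.prod ^ d • m ∈ (pw ys (a + d) • ⊤ : Submodule A M) := by
  induction hm using Submodule.smul_induction_on' with
  | smul r hr l _ =>
    rw [smul_smul]
    refine Submodule.smul_mem_smul ?_ trivial
    refine Submodule.span_induction ?_ ?_ ?_ ?_ hr
    · rintro _ ⟨x, hx, rfl⟩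
      obtain ⟨q, hq⟩ := List.dvd_prod hx
      rw [hq, mul_pow]
      have : (x ^ d * q ^ d) * x ^ a = q ^ d * x ^ (a + d) := by ring
      rw [this]
      exact Ideal.mul_mem_left _ _ (Ideal.subset_span ⟨x, hx, rfl⟩)
    · simp
    · intro x y _ _ hx hy; rw [mul_add]; exact add_mem hx hy
    · intro c x _ hx
      rw [smul_eq_mul, mul_left_comm]; exact Ideal.mul_mem_left _ _ hx
  | add a _ b _ ha hb => rw [smul_add]; exact add_mem ha hb

/-- The map `m ↦ [m / (y_1 ⋯ y_r) ^ n]`. -/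
noncomputable def ee : (ys : List A) → {M : ModuleCat.{u} A} → ℕ → (M →ₗ[A] T ys M)
  | [], _, _ => LinearMap.id
  | y :: ys, M, n => (ee ys (M := ModuleCat.of A (Lq y M)) n).comp (frac y n)

lemma ee_cons (y : A) (ys : List A) (n : ℕ) (m : M) :
    ee (y :: ys) n m = ee ys (M := ModuleCat.of A (Lq y M)) n (frac y n m) := rfl

lemma ee_add (ys : List A) (n d : ℕ) (m : M) : ee ys (n + d) (ys.prod ^ d • m) = ee ys n m := by
  induction ys generalizing M with
  | nil => simp [ee]
  | cons y ys ih =>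
    rw [ee_cons, List.prod_cons, mul_pow, mul_comm, mul_smul, map_smul, frac_add, ee_cons]
    exact ih (M := ModuleCat.of A (Lq y M)) _

lemma ee_surj_ge (ys : List A) (u : T ys M) : ∃ n₀, ∀ n ≥ n₀, ∃ m, ee ys n m = u := by
  induction ys generalizing M with
  | nil => exact ⟨0, fun n _ => ⟨u, rfl⟩⟩
  | cons y ys ih =>
    obtain ⟨n₀, h⟩ := ih (M := ModuleCat.of A (Lq y M)) u
    obtain ⟨w, hw⟩ := h n₀ le_rfl
    obtain ⟨n₁, h₁⟩ := frac_surj_ge (w : Lq y M)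
    refine ⟨max n₀ n₁, fun n hn => ?_⟩
    obtain ⟨d, rfl⟩ := Nat.exists_eq_add_of_le (le_trans (le_max_left _ _) hn)
    obtain ⟨m, hm⟩ := h₁ _ (le_trans (le_max_right _ _) hn)
    refine ⟨ys.prod ^ d • m, ?_⟩
    rw [ee_cons, map_smul, hm, ← hw]
    exact ee_add (M := ModuleCat.of A (Lq y M)) ys n₀ d w

/-- The kernel of `m ↦ [m / (y_1 ⋯ y_r) ^ n]` is the limit closure of `y_1 ^ n, …, y_r ^ n`. -/
lemma ee_eq_zero_iff (ys : List A) (n : ℕ) (m : M) :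
    ee ys n m = 0 ↔ ∃ k, ys.prod ^ k • m ∈ (pw ys (n + k) • ⊤ : Submodule A M) := by
  induction ys generalizing M with
  | nil =>
    change m = 0 ↔ _
    simp [pw]
  | cons y ys ih =>
    refine Iff.trans (ih (M := ModuleCat.of A (Lq y M)) (frac y n m)) ?_
    constructor
    · rintro ⟨k, hk⟩
      obtain ⟨p₀, hp⟩ := Lq_mem_smul_top _ _ hk
      obtain ⟨m', hm', h⟩ := hp (n + p₀) (Nat.le_add_left _ _)
      have hdiff : frac y (n + p₀) (m' - y ^ p₀ • ys.prod ^ k • m) = 0 := by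
        rw [map_sub, frac_add, h, map_smul]; exact sub_self _
      rw [frac_eq_zero_iff] at hdiff
      obtain ⟨j, w, hw⟩ := hdiff
      -- both exponents are raised to the common value `k + j + p₀`
      refine ⟨k + (j + p₀), ?_⟩
      have e : (y :: ys).prod ^ (k + (j + p₀)) • m =
          y ^ (k + j) • ys.prod ^ (j + p₀) • m' -
            y ^ (n + (k + (j + p₀))) • (ys.prod ^ (j + p₀) • w) := by
        have : y ^ (n + (k + (j + p₀))) • (ys.prod ^ (j + p₀) • w) =
            (y ^ k * ys.prod ^ (j + p₀)) • y ^ (j + (n + p₀)) • w := by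
          simp only [smul_smul]; congr 1; ring
        rw [this, ← hw, List.prod_cons, smul_sub, smul_sub]
        simp only [smul_smul]
        rw [eq_sub_iff_add_eq, ← sub_eq_zero]
        have e2 : y ^ k * ys.prod ^ (j + p₀) * y ^ j = y ^ (k + j) * ys.prod ^ (j + p₀) := by ring
        have e3 : y ^ k * ys.prod ^ (j + p₀) * (y ^ j * (y ^ p₀ * ys.prod ^ k)) =
          (y * ys.prod) ^ (k + (j + p₀)) := by ring
        simp only [e2, e3]
        abel
      rw [e, pw_cons]
      refine sub_mem (Submodule.smul_mem _ _ ?_) (Submodule.smul_mem_smul ?_ trivial)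
      · have := prod_pow_smul_mem ys (n + k) (j + p₀) m' hm'
        rw [add_assoc] at this
        exact Submodule.smul_mono_left le_sup_right this
      · exact Ideal.mem_sup_left (Ideal.mem_span_singleton_self _)
    · rintro ⟨k, hk⟩
      rw [pw_cons, Submodule.sup_smul] at hk
      obtain ⟨a, ha, b, hb, hab⟩ := Submodule.mem_sup.1 hk
      rw [Submodule.ideal_span_singleton_smul] at ha
      obtain ⟨w, -, hw⟩ := ha
      refine ⟨k, ?_⟩
      have hz : ys.prod ^ k • frac y n m = frac y (n + k) b := by
        rw [← map_smul, ← frac_add n k, smul_smul, ← mul_pow]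
        rw [List.prod_cons] at hk hab
        rw [← hab, map_add, ← hw]
        rw [DistribSMul.toLinearMap_apply, map_smul, pow_smul_frac, zero_add]
      change ys.prod ^ k • frac y n m ∈ _
      rw [hz]
      have := Submodule.mem_map_of_mem (f := frac y (n + k)) hb
      rw [Submodule.map_smul''] at this
      exact Submodule.smul_mono le_rfl le_top this

/-- Multiplication by `c` is zero on the module `M`. -/
def Kills (c : A) (M : ModuleCat.{u} A) : Prop := ∀ u : M, c • u = 0

/-- The action of `c` on `T xs M` being zero is a membership statement in `M`, symmetric in the
elements of `xs`; hence it does not depend on their order. -/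
lemma kills_T_iff (c : A) (xs : List A) (M : ModuleCat.{u} A) :
    Kills c (T xs M) ↔
      ∀ (n : ℕ) (m : M), ∃ k, xs.prod ^ k • c • m ∈ (pw xs (n + k) • ⊤ : Submodule A M) := by
  constructor
  · intro h n m
    rw [← ee_eq_zero_iff, map_smul]
    exact h _
  · intro h u
    obtain ⟨n, hn⟩ := ee_surj_ge xs u
    obtain ⟨m, rfl⟩ := hn n le_rfl
    rw [← map_smul, ee_eq_zero_iff]
    exact h n m

lemma kills_T_perm (c : A) {xs ys : List A} (h : xs.Perm ys) (M : ModuleCat.{u} A) :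
    Kills c (T xs M) ↔ Kills c (T ys M) := by
  have : pw xs = pw ys := by
    ext1 k; unfold pw; congr 2; ext z; exact h.mem_iff
  rw [kills_T_iff, kills_T_iff, this, h.prod_eq]

lemma mem_radical_torsionOf_iff {M : Type*} [AddCommGroup M] [Module A M] (u : M) (a : A) :
    a ∈ (Ideal.torsionOf A M u).radical ↔ ∃ k, a ^ k • u = 0 := by
  simp [Ideal.mem_radical_iff, Ideal.mem_torsionOf_iff]

/-- The ideal generated by `xs` acts locally nilpotently on `T xs M`. -/
lemma T_nilp (xs : List A) (u : T xs M) (a : A) (ha : a ∈ Ideal.span {x | x ∈ xs}) :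
    ∃ k, a ^ k • u = 0 := by
  rw [← mem_radical_torsionOf_iff]
  refine (Ideal.span_le.2 fun x hx => ?_) ha
  rw [SetLike.mem_coe, mem_radical_torsionOf_iff]
  obtain ⟨n, hn⟩ := ee_surj_ge xs u
  obtain ⟨m, rfl⟩ := hn n le_rfl
  refine ⟨n, ?_⟩
  rw [← map_smul, ee_eq_zero_iff]
  refine ⟨0, ?_⟩
  rw [pow_zero, one_smul]
  exact Submodule.smul_mem_smul (Ideal.subset_span ⟨x, hx, rfl⟩) trivial

/-- Replacing `x` by `x + a` does not create new elements in `Lq`, provided that `a` acts locally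
nilpotently: write `v = x ^ p w` modulo `x`-torsion and expand `(x + a - a) ^ p`. -/
lemma kills_Lq_transform {Z : Type u} [AddCommGroup Z] [Module A Z] (c x a : A)
    (ha : ∀ z : Z, ∃ k, a ^ k • z = 0) (h : ∀ l : Lq x Z, c • l = 0) (l : Lq (x + a) Z) :
    c • l = 0 := by
  obtain ⟨n, z, rfl⟩ := frac_surj l
  rw [← map_smul]
  set v := c • z with hv
  obtain ⟨f, hf⟩ := ha v
  have hx := h (frac x (n + f) z)
  rw [← map_smul, frac_eq_zero_iff] at hx
  obtain ⟨j, w, hw⟩ := hx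
  -- elements killed by a power of `x` are killed by a power of `x + a`
  have tor : ∀ (u : Z) (k : ℕ), x ^ k • u = 0 → ∃ k, (x + a) ^ k • u = 0 := by
    intro u k hu
    rw [← mem_radical_torsionOf_iff]
    refine Ideal.add_mem _ ?_ ?_
    · rw [mem_radical_torsionOf_iff]; exact ⟨k, hu⟩
    · rw [mem_radical_torsionOf_iff]; exact ha u
  obtain ⟨k₁, hk₁⟩ := tor (v - x ^ (n + f) • w) j (by
    rw [smul_sub, hw, smul_smul, ← pow_add, sub_self])
  obtain ⟨k₂, hk₂⟩ := tor (a ^ f • w) (j + (n + f)) (by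
    rw [smul_comm, ← hw, smul_comm, hf, smul_zero])
  have hbin : ∃ q r : A, x ^ (n + f) = (x + a) ^ n * q + a ^ f * r := by
    have key : ∀ b : A, (b + -a) ^ (n + f) ∈ Ideal.span {b ^ n} ⊔ Ideal.span {a ^ f} := by
      intro b
      rw [add_pow]
      refine Ideal.sum_mem _ fun i hi => ?_
      rcases le_or_gt n i with hni | hni
      · refine Ideal.mul_mem_right _ _ (Ideal.mul_mem_right _ _ (Ideal.mem_sup_left ?_))
        exact Ideal.mem_span_singleton.2 (pow_dvd_pow _ hni)
      · refine Ideal.mul_mem_right _ _ (Ideal.mul_mem_left _ _ (Ideal.mem_sup_right ?_))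
        rw [neg_pow]
        exact Ideal.mul_mem_left _ _
          (Ideal.mem_span_singleton.2 (pow_dvd_pow _ (by omega)))
    have := key (x + a)
    rw [add_neg_cancel_right] at this
    obtain ⟨p, hp, q, hq, hpq⟩ := Submodule.mem_sup.1 this
    obtain ⟨p, rfl⟩ := Ideal.mem_span_singleton.1 hp
    obtain ⟨q, rfl⟩ := Ideal.mem_span_singleton.1 hq
    exact ⟨p, q, hpq.symm⟩
  obtain ⟨q, r, hqr⟩ := hbin
  rw [frac_eq_zero_iff]
  refine ⟨k₁ + k₂, q • w, ?_⟩
  have e1 : v = (v - x ^ (n + f) • w) + ((x + a) ^ n • q • w + r • a ^ f • w) := by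
    rw [hqr]
    module
  rw [e1, smul_add, smul_add, pow_add, mul_comm, mul_smul, hk₁, smul_zero, zero_add,
    mul_comm ((x + a) ^ k₂), mul_smul _ _ (r • _), smul_comm _ r (a ^ f • w), hk₂]
  simp only [smul_zero, add_zero, smul_smul]
  congr 1
  ring

/-- The last element of the list may be changed by an element of the ideal generated by the
others: the latter ideal acts locally nilpotently on `T zs M`. -/
lemma kills_T_transform (c : A) (zs : List A) (x a : A) (ha : a ∈ Ideal.span {z | z ∈ zs})
    (M : ModuleCat.{u} A) (h : Kills c (T (zs ++ [x]) M)) : Kills c (T (zs ++ [x + a]) M) := by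
  rw [T_append] at h ⊢
  exact fun l => kills_Lq_transform c x a (fun z => T_nilp zs z a ha) h l

end TFunctor

/-! ### Dimension drop and vanishing -/

section Avoid

/-- Prime avoidance for a coset: if no prime of the finite set `S` contains both `x` and `I`, some
element of `x + I` lies outside all primes of `S`. -/
lemma exists_coset_avoid {A : Type*} [CommRing A] (x : A) (I : Ideal A) (S : Finset (Ideal A))
    (hS : ∀ q ∈ S, q.IsPrime) (hx : ∀ q ∈ S, x ∈ q → ¬ I ≤ q) :
    ∃ a ∈ I, ∀ q ∈ S, x + a ∉ q := by
  classical
  induction hn : S.card generalizing S with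
  | zero =>
    rw [Finset.card_eq_zero] at hn
    exact ⟨0, I.zero_mem, by simp [hn]⟩
  | succ n ih =>
    obtain ⟨q, hqm⟩ := S.exists_minimal (Finset.card_pos.1 (by omega))
    have hq := hqm.prop
    obtain ⟨a, ha, hav⟩ := ih (S.erase q) (fun p hp => hS p (Finset.mem_of_mem_erase hp))
      (fun p hp => hx p (Finset.mem_of_mem_erase hp)) (by rw [Finset.card_erase_of_mem hq]; omega)
    by_cases h : x + a ∈ q
    swap
    · refine ⟨a, ha, fun p hp => ?_⟩
      by_cases hpq : p = q
      · rwa [hpq]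
      · exact hav p (Finset.mem_erase.2 ⟨hpq, hp⟩)
    have hqp := hS q hq
    have hIq : ¬ I ≤ q := fun hI => hx q hq ((Ideal.add_mem_iff_left q (hI ha)).1 h) hI
    -- by minimality of `q`, some `b ∈ I` lies in all other primes but not in `q`
    have hb : ¬ (I * ∏ p ∈ S.erase q, p ≤ q) := by
      intro hle
      rcases hqp.mul_le.1 hle with h' | h'
      · exact hIq h'
      · obtain ⟨p, hp, hpq⟩ := (hqp.prod_le).1 h'
        rw [Finset.mem_erase] at hp
        exact hp.1 (le_antisymm hpq (hqm.le_of_le hp.2 hpq))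
    obtain ⟨b, hb, hbq⟩ := SetLike.not_le_iff_exists.1 hb
    refine ⟨a + b, I.add_mem ha ((Ideal.mul_le_left : I * _ ≤ I) hb), fun p hp => ?_⟩
    rw [← add_assoc]
    by_cases hpq : p = q
    · subst hpq
      exact fun hc => hbq ((Ideal.add_mem_iff_right p h).1 hc)
    · have hp' := Finset.mem_erase.2 ⟨hpq, hp⟩
      have hbp : b ∈ p := by
        have := (Ideal.mul_le_right : I * (∏ p ∈ S.erase q, p) ≤ _) hb
        exact (Finset.inf_le hp' : (S.erase q).inf id ≤ p) (Ideal.prod_le_inf this)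
      exact fun hc => hav p hp' ((Ideal.add_mem_iff_left p hbp).1 hc)

end Avoid

section Vanishing
variable {A : Type u} [CommRing A]

/-- Cutting by an element outside all minimal primes of `I` lowers the dimension, since a chain of
primes containing `I` and `y` can be extended downwards. -/
lemma dim_drop (I : Ideal A) (y : A) (hy : ∀ q ∈ I.minimalPrimes, y ∉ q) (n : ℕ)
    (h : ringKrullDim (A ⧸ I) < (n + 1 : ℕ)) :
    ringKrullDim (A ⧸ (I ⊔ Ideal.span {y})) < n := by
  rw [ringKrullDim_quotient] at h ⊢
  by_contra hc
  rw [not_lt, Order.le_krullDim_iff] at hc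
  obtain ⟨l, hl⟩ := hc
  have hI : I ≤ l.head.1.asIdeal := le_sup_left.trans l.head.2
  obtain ⟨p, hp, hp'⟩ := Ideal.exists_minimalPrimes_le hI
  let p' : PrimeSpectrum.zeroLocus (I : Set A) := ⟨⟨p, hp.1.1⟩, hp.1.2⟩
  let φ : PrimeSpectrum.zeroLocus ((I ⊔ Ideal.span {y} : Ideal A) : Set A) →
      PrimeSpectrum.zeroLocus (I : Set A) :=
    fun q => ⟨q.1, le_sup_left.trans (show (I ⊔ Ideal.span {y} : Ideal A) ≤ _ from q.2)⟩
  have hφ : StrictMono φ := fun a b hab => hab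
  have hlt : p' < φ l.head := by
    refine lt_of_le_of_ne hp' fun h => hy p hp ?_
    have h1 : p = l.head.1.asIdeal := congrArg (fun z => z.1.asIdeal) h
    rw [h1]
    exact l.head.2 (Ideal.mem_sup_right (Ideal.mem_span_singleton_self y))
  have : ((n + 1 : ℕ) : WithBot ℕ∞) ≤ Order.krullDim (PrimeSpectrum.zeroLocus (I : Set A)) := by
    rw [Order.le_krullDim_iff]
    exact ⟨(l.map φ hφ).cons p' hlt,
      (RelSeries.cons_length (l.map φ hφ) p' hlt).trans
        (congrArg (· + 1) hl)⟩
  exact absurd h (not_lt.2 this)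

lemma kills_T_of_subsingleton (c : A) (xs : List A) (M : ModuleCat.{u} A) [Subsingleton M] :
    Kills c (T xs M) := by
  rw [kills_T_iff]
  intro n m
  exact ⟨0, by rw [Subsingleton.elim m 0]; simp⟩

variable [IsNoetherianRing A] [IsLocalRing A]

/-- The top local cohomology along a list longer than the dimension vanishes. -/
lemma T_vanish (xs : List A) (I : Ideal A) (hdim : ringKrullDim (A ⧸ I) < xs.length)
    (hxs : ∀ x ∈ xs, x ∈ maximalIdeal A)
    (hm : maximalIdeal A ≤ (I ⊔ Ideal.span {x | x ∈ xs}).radical) :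
    Kills 1 (T xs (ModuleCat.of A (A ⧸ I))) := by
  induction xs generalizing I with
  | nil =>
    have : Subsingleton (A ⧸ I) := by
      by_contra hc
      rw [not_subsingleton_iff_nontrivial] at hc
      have := ringKrullDim_nonneg_of_nontrivial (R := A ⧸ I)
      exact absurd hdim (not_lt.2 (by simpa using this))
    intro u
    exact Subsingleton.elim (α := A ⧸ I) _ _
  | cons x xs ih =>
    by_cases hmin : maximalIdeal A ∈ I.minimalPrimes
    · -- here `x` is nilpotent on `A ⧸ I`
      have hx : ∃ k, x ^ k ∈ I := by
        have : x ∈ I.radical := by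
          rw [Ideal.radical_eq_sInf, Submodule.mem_sInf]
          rintro q ⟨hIq, hq⟩
          exact hmin.2 ⟨hq, hIq⟩ (le_maximalIdeal hq.ne_top) (hxs x (by simp))
        exact this
      obtain ⟨k, hk⟩ := hx
      have : Subsingleton (Lq x (A ⧸ I)) := by
        refine subsingleton_of_forall_eq 0 fun l => ?_
        obtain ⟨n, m, rfl⟩ := frac_surj l
        rw [frac_eq_zero_iff]
        obtain ⟨m, rfl⟩ := Ideal.Quotient.mk_surjective m
        refine ⟨k, 0, ?_⟩
        rw [smul_zero, ← Ideal.Quotient.mk_eq_mk, ← Submodule.Quotient.mk_smul,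
          Submodule.Quotient.mk_eq_zero]
        exact I.mul_mem_right _ hk
      exact kills_T_of_subsingleton 1 xs (ModuleCat.of A (Lq x (A ⧸ I)))
    have hfin := I.finite_minimalPrimes_of_isNoetherianRing
    obtain ⟨a, ha, hav⟩ := exists_coset_avoid x (Ideal.span {x | x ∈ xs}) hfin.toFinset
      (fun q hq => ((Set.Finite.mem_toFinset _).1 hq).1.1) (by
        intro q hq hxq hle
        rw [Set.Finite.mem_toFinset] at hq
        have hqp := hq.1.1
        have : maximalIdeal A ≤ q := by
          refine hm.trans ((Ideal.radical_mono (sup_le hq.1.2 (Ideal.span_le.2 ?_))).trans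
            hqp.radical.le)
          intro z hz
          rcases List.mem_cons.1 hz with rfl | hz
          · exact hxq
          · exact hle (Ideal.subset_span hz)
        exact hmin ((le_antisymm this (le_maximalIdeal hqp.ne_top)) ▸ hq))
    set y := x + a with hy
    have hxa : x = y + (-a) := by rw [hy]; ring
    have hdrop : ringKrullDim (A ⧸ (I ⊔ Ideal.span {y})) < xs.length :=
      dim_drop I y (fun q hq => hav q (by simpa using hq)) _ (by simpa using hdim)
    have hspan : I ⊔ Ideal.span {z | z ∈ x :: xs} ≤
        (I ⊔ Ideal.span {y}) ⊔ Ideal.span {z | z ∈ xs} := by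
      refine sup_le (le_sup_left.trans le_sup_left) (Ideal.span_le.2 ?_)
      intro z hz
      rcases List.mem_cons.1 hz with rfl | hz
      · rw [hxa]
        exact Ideal.add_mem _ (Ideal.mem_sup_left (Ideal.mem_sup_right
          (Ideal.mem_span_singleton_self _))) (Ideal.mem_sup_right (neg_mem ha))
      · exact Ideal.mem_sup_right (Ideal.subset_span hz)
    have hIH := ih (I ⊔ Ideal.span {y}) hdrop (fun z hz => hxs z (by simp [hz]))
      (hm.trans (Ideal.radical_mono hspan))
    have main : Kills 1 (T (y :: xs) (ModuleCat.of A (A ⧸ I))) := by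
      let p : (A ⧸ I) →ₗ[A] (A ⧸ (I ⊔ Ideal.span {y})) := Submodule.factor le_sup_left
      let g : (A ⧸ (I ⊔ Ideal.span {y})) →ₗ[A] Lq y (A ⧸ I) :=
        Submodule.liftQ _ (LinearMap.toSpanSingleton A _ (frac y 1 (1 : A ⧸ I))) (by
          refine sup_le ?_ ?_
          · intro z hz
            rw [LinearMap.mem_ker, LinearMap.toSpanSingleton_apply, ← map_smul]
            have : z • (1 : A ⧸ I) = 0 := by
              rw [Algebra.smul_def, mul_one]
              exact Ideal.Quotient.eq_zero_iff_mem.2 hz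
            rw [this, map_zero]
          · rw [Ideal.span_le, Set.singleton_subset_iff]
            change _ ∈ LinearMap.ker _
            rw [LinearMap.mem_ker, LinearMap.toSpanSingleton_apply]
            simpa using pow_smul_frac (y := y) 1 (1 : A ⧸ I))
      have hgp : g.comp p = frac y 1 := by
        refine LinearMap.ext fun z => ?_
        obtain ⟨z, rfl⟩ := Submodule.mkQ_surjective _ z
        change z • frac y 1 (1 : A ⧸ I) = frac y 1 (Submodule.Quotient.mk z)
        rw [← map_smul, Algebra.smul_def, mul_one]
        rfl
      have hex : Function.Exact (frac y 1 : (A ⧸ I) →ₗ[A] Lq y (A ⧸ I))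
          (y • (LinearMap.id : Lq y (A ⧸ I) →ₗ[A] _)) := by
        intro l
        constructor
        · intro h; exact Lq_ker_smul l h
        · rintro ⟨m, rfl⟩
          simpa using pow_smul_frac (y := y) 1 m
      have hTex := Tmap_exact xs (N := ModuleCat.of A (A ⧸ I))
        (M := ModuleCat.of A (Lq y (A ⧸ I))) (B := ModuleCat.of A (Lq y (A ⧸ I))) hex
        (fun l => Lq_smul_surj l)
      have hinj : ∀ u : T xs (ModuleCat.of A (Lq y (A ⧸ I))), y • u = 0 → u = 0 := by
        intro u hu
        obtain ⟨w, hw⟩ := (hTex u).1 (by rw [Tmap_smul_id]; exact hu)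
        rw [← hw, ← hgp, Tmap_comp (M := ModuleCat.of A (A ⧸ I))
          (N := ModuleCat.of A (A ⧸ (I ⊔ Ideal.span {y})))
          (B := ModuleCat.of A (Lq y (A ⧸ I)))]
        have h0 := hIH (Tmap xs (M := ModuleCat.of A (A ⧸ I))
          (N := ModuleCat.of A (A ⧸ (I ⊔ Ideal.span {y}))) p w)
        rw [one_smul] at h0
        rw [LinearMap.comp_apply, h0, map_zero]
      intro u
      rw [one_smul]
      obtain ⟨k, hk⟩ := T_nilp (y :: xs) u y (Ideal.subset_span (by simp))
      induction k with
      | zero => simpa using hk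
      | succ k ihk =>
        rw [pow_succ', mul_smul] at hk
        exact ihk (hinj _ hk)
    rw [kills_T_perm 1 (List.perm_append_singleton y xs).symm] at main
    have := kills_T_transform 1 xs y (-a) (neg_mem ha) _ main
    rw [← hxa] at this
    rwa [kills_T_perm 1 (List.perm_append_singleton x xs)] at this

end Vanishing

/-! ### Torsion at the maximal ideal and filter-regular sequences -/

section FilterRegular
variable {A : Type u} [CommRing A] [IsLocalRing A]

/-- An element on which the maximal ideal acts nilpotently. -/
def MT {M : Type u} [AddCommGroup M] [Module A M] (u : M) : Prop :=
  ∀ a ∈ maximalIdeal A, ∃ k : ℕ, a ^ k • u = 0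

lemma mt_iff {M : Type u} [AddCommGroup M] [Module A M] (u : M) :
    MT (A := A) u ↔ maximalIdeal A ≤ (Ideal.torsionOf A M u).radical :=
  forall₂_congr fun a _ => (mem_radical_torsionOf_iff u a).symm

lemma mt_of_map {M N : Type u} [AddCommGroup M] [Module A M] [AddCommGroup N] [Module A N]
    (f : M →ₗ[A] N) (hf : ∀ u, f u = 0 → MT (A := A) u) (u : M) (h : MT (A := A) (f u)) :
    MT (A := A) u := by
  intro a ha
  obtain ⟨k, hk⟩ := h a ha
  rw [← map_smul] at hk
  obtain ⟨l, hl⟩ := hf _ hk a ha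
  exact ⟨l + k, by rw [pow_add, mul_smul, hl]⟩

lemma mt_map {M N : Type u} [AddCommGroup M] [Module A M] [AddCommGroup N] [Module A N]
    (f : M →ₗ[A] N) (u : M) (h : MT (A := A) u) : MT (A := A) (f u) := by
  intro a ha
  obtain ⟨k, hk⟩ := h a ha
  exact ⟨k, by rw [← map_smul, hk, map_zero]⟩

variable (A) in
/-- The submodule `Γ_m(M)` of elements on which the maximal ideal acts nilpotently. -/
def Gam (M : Type u) [AddCommGroup M] [Module A M] : Submodule A M where
  carrier := {u | MT (A := A) u}
  zero_mem' := fun a _ => ⟨0, by simp⟩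
  add_mem' := by
    intro u v hu hv a ha
    obtain ⟨k, hk⟩ := hu a ha
    obtain ⟨l, hl⟩ := hv a ha
    refine ⟨k + l, ?_⟩
    rw [smul_add, pow_add, mul_smul _ _ v, hl, mul_comm, mul_smul, hk]
    simp
  smul_mem' := by
    intro c u hu a ha
    obtain ⟨k, hk⟩ := hu a ha
    exact ⟨k, by rw [smul_comm, hk, smul_zero]⟩

lemma mem_Gam {M : Type u} [AddCommGroup M] [Module A M] {u : M} :
    u ∈ Gam A M ↔ MT (A := A) u := Iff.rfl

/-- `M` is filter-regular along the list: for each entry `y`, the `y`-torsion of the iterate `T`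
of the preceding entries is `m`-torsion. -/
def FR : List A → ModuleCat.{u} A → Prop
  | [], _ => True
  | y :: ys, M => (∀ u : M, (∃ k : ℕ, y ^ k • u = 0) → MT (A := A) u) ∧
      FR ys (ModuleCat.of A (Lq y M))

lemma FR_append (xs ys : List A) (M : ModuleCat.{u} A) :
    FR (xs ++ ys) M ↔ FR xs M ∧ FR ys (T xs M) := by
  induction xs generalizing M with
  | nil => exact ⟨fun h => ⟨trivial, h⟩, fun h => h.2⟩
  | cons x xs ih =>
    change (_ ∧ FR (xs ++ ys) (ModuleCat.of A (Lq x M))) ↔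
      (_ ∧ FR xs (ModuleCat.of A (Lq x M))) ∧ FR ys (T xs (ModuleCat.of A (Lq x M)))
    rw [ih, and_assoc]

/-- The one-step case of `Tmap_ker_mt`: the kernel of `L_y N → L_y M` comes from the `y`-torsion
of `B` and from the kernel of `N → M`, both of which are `m`-torsion. -/
lemma Lmap_ker_mt {N M B : Type u} [AddCommGroup M] [Module A M] [AddCommGroup N] [Module A N]
    [AddCommGroup B] [Module A B] (y : A) (f : N →ₗ[A] M) (g : M →ₗ[A] B)
    (hex : Function.Exact f g) (hf : ∀ u, f u = 0 → MT (A := A) u)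
    (hB : ∀ u : B, (∃ k : ℕ, y ^ k • u = 0) → MT (A := A) u) (l : Lq y N)
    (hl : Lmap y f l = 0) : MT (A := A) l := by
  intro a ha
  obtain ⟨k, n, rfl⟩ := frac_surj l
  rw [Lmap_frac, frac_eq_zero_iff] at hl
  obtain ⟨j, m, hm⟩ := hl
  obtain ⟨r, hr⟩ := hB (g m) ⟨j + k, by
    rw [← map_smul, ← hm, ← map_smul]; exact hex.apply_apply_eq_zero _⟩ a ha
  rw [← map_smul] at hr
  obtain ⟨n', hn'⟩ := (hex _).1 hr
  obtain ⟨r', hr'⟩ := hf (y ^ (j + k) • n' - a ^ r • y ^ j • n) (by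
    rw [map_sub, map_smul, map_smul, map_smul, hn', hm, smul_comm, sub_self]) a ha
  refine ⟨r' + r, ?_⟩
  rw [← map_smul, frac_eq_zero_iff]
  refine ⟨j, a ^ r' • n', ?_⟩
  rw [smul_sub, sub_eq_zero] at hr'
  rw [smul_comm (y ^ (j + k)), hr', pow_add, mul_smul, smul_comm (y ^ j), smul_comm (y ^ j)]

/-- For an exact sequence `N → M → B → 0` whose first map has `m`-torsion kernel, the map
`T ys N → T ys M` also has `m`-torsion kernel as soon as `B` satisfies `FR ys`. -/
lemma Tmap_ker_mt (ys : List A) {N M B : ModuleCat.{u} A} (f : N →ₗ[A] M) (g : M →ₗ[A] B)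
    (hex : Function.Exact f g) (hg : Function.Surjective g) (hf : ∀ u, f u = 0 → MT (A := A) u)
    (hB : FR ys B) (u : T ys N) (hu : Tmap ys f u = 0) : MT (A := A) u := by
  induction ys generalizing N M B with
  | nil => exact hf u hu
  | cons y ys ih =>
    exact ih (N := ModuleCat.of A (Lq y N)) (M := ModuleCat.of A (Lq y M))
      (B := ModuleCat.of A (Lq y B)) (Lmap y f) (Lmap y g) (Lmap_exact hex hg) (Lmap_surj hg)
      (Lmap_ker_mt y f g hex hf hB.1) hB.2 u hu

/-- `FR` passes to the left-hand term of a sequence `N → M → B → 0` that is exact up to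
`m`-torsion in `N`. -/
lemma FR_ker (ys : List A) {N M B : ModuleCat.{u} A} (f : N →ₗ[A] M) (g : M →ₗ[A] B)
    (hex : Function.Exact f g) (hg : Function.Surjective g) (hf : ∀ u, f u = 0 → MT (A := A) u)
    (hM : FR ys M) (hB : FR ys B) : FR ys N := by
  induction ys generalizing N M B with
  | nil => trivial
  | cons y ys ih =>
    refine ⟨fun u ⟨k, hk⟩ => mt_of_map f hf u (hM.1 _ ⟨k, by rw [← map_smul, hk, map_zero]⟩), ?_⟩
    exact ih (N := ModuleCat.of A (Lq y N)) (M := ModuleCat.of A (Lq y M))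
      (B := ModuleCat.of A (Lq y B)) (Lmap y f) (Lmap y g) (Lmap_exact hex hg) (Lmap_surj hg)
      (Lmap_ker_mt y f g hex hf hB.1) hM.2 hB.2

end FilterRegular

/-! ### An injective module with simple socle -/

section Hull
variable {A : Type u} [CommRing A] [IsLocalRing A]

/-- Over a local ring there is an injective module `E` whose socle is generated by one nonzero
element (an injective hull of the residue field). It is cut out of an injective module `F`
containing the residue field as a maximal essential extension of its socle element `v`; a
submodule `L` of `F` maximal with `v ∉ L` yields a retraction of `F` onto it. -/
lemma exists_hull : ∃ (E : ModuleCat.{u} A) (v : E), Module.Injective A E ∧ v ≠ 0 ∧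
    (∀ a ∈ maximalIdeal A, a • v = 0) ∧
    ∀ w : E, (∀ a ∈ maximalIdeal A, a • w = 0) → w ∈ Submodule.span A {v} := by
  classical
  obtain ⟨⟨F, hF, i, hi⟩⟩ := CategoryTheory.EnoughInjectives.presentation
    (ModuleCat.of A (A ⧸ maximalIdeal A))
  have hFinj : Module.Injective A F := Module.injective_module_of_injective_object A F
  have hiinj : Function.Injective i.hom := (ModuleCat.mono_iff_injective i).1 hi
  set v : F := i.hom (1 : A ⧸ maximalIdeal A) with hv
  have hv0 : v ≠ 0 := by
    intro h
    have : (1 : A ⧸ maximalIdeal A) = 0 := hiinj (by rw [map_zero]; exact h)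
    exact one_ne_zero this
  have hmv : ∀ a ∈ maximalIdeal A, a • v = 0 := by
    intro a ha
    have h0 : a • (1 : A ⧸ maximalIdeal A) = 0 := by
      rw [Algebra.smul_def, mul_one]; exact Ideal.Quotient.eq_zero_iff_mem.2 ha
    have h1 : i.hom (a • (1 : A ⧸ maximalIdeal A)) = a • v := map_smul i.hom a _
    rw [← h1, h0, map_zero]
  -- a multiple of `v` which is nonzero generates `v`
  have hunit : ∀ a : A, a • v ≠ 0 → ∃ b : A, b • a • v = v := by
    intro a ha
    have hu : IsUnit a := by
      by_contra hc
      exact ha (hmv a hc)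
    obtain ⟨b, hb⟩ := hu.exists_left_inv
    exact ⟨b, by rw [smul_smul, hb, one_smul]⟩
  let S : Set (Submodule A F) := {E | ∀ e ∈ E, e ≠ 0 → ∃ a : A, a • e = v}
  obtain ⟨E, hvE, hE⟩ := zorn_le_nonempty₀ S (by
    intro c hc hchain y hy
    refine ⟨sSup c, ?_, fun z hz => le_sSup hz⟩
    intro e he
    obtain ⟨z, hz, hez⟩ := (Submodule.mem_sSup_of_directed ⟨y, hy⟩ hchain.directedOn).1 he
    exact hc hz e hez) (Submodule.span A {v}) (by
    intro e he h0
    obtain ⟨a, rfl⟩ := Submodule.mem_span_singleton.1 he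
    exact hunit a h0)
  have hvE' : v ∈ E := hvE (Submodule.mem_span_singleton_self v)
  obtain ⟨L, -, hL⟩ := zorn_le_nonempty₀ {L : Submodule A F | v ∉ L} (by
    intro c hc hchain y hy
    refine ⟨sSup c, ?_, fun z hz => le_sSup hz⟩
    intro he
    obtain ⟨z, hz, hez⟩ := (Submodule.mem_sSup_of_directed ⟨y, hy⟩ hchain.directedOn).1 he
    exact hc hz hez) ⊥ (by simpa using hv0)
  have hEL : ∀ e ∈ E, e ∈ L → e = 0 := by
    intro e he heL
    by_contra h0
    obtain ⟨a, ha⟩ := hE.prop e he h0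
    exact hL.prop (ha ▸ L.smul_mem a heL)
  let j : E →ₗ[A] (F ⧸ L) := L.mkQ.comp E.subtype
  have hj : Function.Injective j := by
    rw [injective_iff_map_eq_zero]
    intro e he
    have : (e : F) ∈ L := (Submodule.Quotient.mk_eq_zero L).1 he
    exact Subtype.ext (hEL e e.2 this)
  obtain ⟨ψ, hψ⟩ := hFinj.out j hj E.subtype
  -- a submodule strictly larger than `L` contains `v`
  have hess : ∀ q : F ⧸ L, q ≠ 0 → ∃ a : A, a • q = L.mkQ v := by
    intro q hq
    obtain ⟨f, rfl⟩ := L.mkQ_surjective q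
    have hfL : f ∉ L := fun h => hq ((Submodule.Quotient.mk_eq_zero L).2 h)
    by_contra hc
    push Not at hc
    have hv' : v ∉ L ⊔ Submodule.span A {f} := by
      intro h
      obtain ⟨l, hl, s, hs, hls⟩ := Submodule.mem_sup.1 h
      obtain ⟨a, rfl⟩ := Submodule.mem_span_singleton.1 hs
      refine hc a ?_
      rw [← hls, map_add, map_smul, Submodule.mkQ_apply L l,
        (Submodule.Quotient.mk_eq_zero L).2 hl, zero_add]
    exact hfL (hL.le_of_ge hv' le_sup_left
      (Submodule.mem_sup_right (Submodule.mem_span_singleton_self f)))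
  have hψv : ψ (L.mkQ v) = v := hψ ⟨v, hvE'⟩
  have hrange : LinearMap.range ψ ∈ S := by
    rintro _ ⟨q, rfl⟩ h0
    obtain ⟨a, ha⟩ := hess q (by rintro rfl; exact h0 (map_zero ψ))
    exact ⟨a, by rw [← map_smul, ha, hψv]⟩
  have hErange : E ≤ LinearMap.range ψ := fun e he => ⟨j ⟨e, he⟩, hψ ⟨e, he⟩⟩
  have hrangeE : ∀ q, ψ q ∈ E := fun q => hE.le_of_ge hrange hErange ⟨q, rfl⟩
  let ρ : F →ₗ[A] E := LinearMap.codRestrict E (ψ.comp L.mkQ) (fun q => hrangeE _)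
  refine ⟨ModuleCat.of A E, ⟨v, hvE'⟩, ⟨?_⟩, ?_, ?_, ?_⟩
  · intro X Y _ _ _ _ f hf g
    obtain ⟨h, hh⟩ := hFinj.out f hf (E.subtype.comp g)
    refine ⟨ρ.comp h, fun x => ?_⟩
    refine Subtype.ext ?_
    change ψ (L.mkQ (h (f x))) = _
    rw [hh]
    exact hψ (g x)
  · exact fun h => hv0 (congrArg Subtype.val h)
  · exact fun a ha => Subtype.ext (hmv a ha)
  · intro w hw
    by_cases h0 : w = 0
    · rw [h0]; exact zero_mem _
    obtain ⟨a, ha⟩ := hE.prop w.1 w.2 (fun h => h0 (Subtype.ext h))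
    have hu : IsUnit a := by
      by_contra hc
      exact hv0 (ha ▸ congrArg Subtype.val (hw a hc))
    obtain ⟨b, hb⟩ := hu.exists_left_inv
    refine Submodule.mem_span_singleton.2 ⟨b, Subtype.ext ?_⟩
    change b • v = w.1
    rw [← ha, smul_smul, hb, one_smul]

end Hull

/-! ### Associated primes and Matlis-type duality -/

section Assoc
variable {A : Type u} [CommRing A] [IsNoetherianRing A]

lemma assoc_iff {M : Type*} [AddCommGroup M] [Module A M] {q : Ideal A} :
    q ∈ associatedPrimes A M ↔ q.IsPrime ∧ ∃ u : M, ∀ a, a ∈ q ↔ a • u = 0 := by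
  rw [AssociatedPrimes.mem_iff, isAssociatedPrime_iff]
  refine and_congr_right fun _ => exists_congr fun u => ?_
  rw [Ideal.ext_iff]
  refine forall_congr' fun a => ?_
  rw [Submodule.mem_colon_singleton, Submodule.mem_bot]

/-- The annihilators of `s ^ k • w` stabilise. -/
lemma exists_stab {M : Type*} [AddCommGroup M] [Module A M] (s : A) (w : M) :
    ∃ N : ℕ, ∀ (a : A) (k : ℕ), s ^ k • a • w = 0 → s ^ N • a • w = 0 := by
  let F : ℕ →o Ideal A := ⟨fun k => Ideal.torsionOf A M (s ^ k • w), by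
    refine monotone_nat_of_le_succ fun k a ha => ?_
    rw [Ideal.mem_torsionOf_iff] at ha ⊢
    rw [pow_succ', mul_smul, smul_comm, ha, smul_zero]⟩
  obtain ⟨N, hN⟩ := monotone_stabilizes_iff_noetherian.2 (inferInstanceAs (IsNoetherian A A)) F
  refine ⟨N, fun a k h => ?_⟩
  have h1 : a ∈ F k := by
    change a ∈ Ideal.torsionOf A M _
    rw [Ideal.mem_torsionOf_iff, smul_comm, h]
  have h2 : a ∈ F N := by
    rcases le_total k N with h | h
    · exact F.monotone h h1
    · rw [hN k h]; exact h1
  change a ∈ Ideal.torsionOf A M _ at h2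
  rw [Ideal.mem_torsionOf_iff, smul_comm] at h2
  exact h2

variable [IsLocalRing A]

/-- If `y` avoids all associated primes other than `m`, its torsion is `m`-torsion. No finiteness
of `M` is needed. -/
lemma mt_of_avoid {M : Type u} [AddCommGroup M] [Module A M] (y : A)
    (hy : ∀ q ∈ associatedPrimes A M, q ≠ maximalIdeal A → y ∉ q) (u : M) (r : ℕ)
    (hu : y ^ r • u = 0) : MT (A := A) u := by
  intro a ha
  obtain ⟨N, hN⟩ := exists_stab a u
  refine ⟨N, ?_⟩
  by_contra h0
  let S := Submodule.span A {a ^ N • u}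
  have hnt : Nontrivial S := by
    refine ⟨⟨⟨a ^ N • u, Submodule.mem_span_singleton_self _⟩, 0, fun h => h0 ?_⟩⟩
    exact congrArg Subtype.val h
  obtain ⟨q, hq⟩ := associatedPrimes.nonempty A S
  have hqM := associatedPrimes.subset_of_injective S.injective_subtype hq
  obtain ⟨hqp, ⟨w, hw⟩, hqw⟩ := assoc_iff.1 hq
  obtain ⟨b, rfl⟩ := Submodule.mem_span_singleton.1 hw
  have hqw' : ∀ c, c ∈ q ↔ c • b • a ^ N • u = 0 := by
    intro c
    rw [hqw]
    exact ⟨fun h => congrArg Subtype.val h, fun h => Subtype.ext h⟩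
  have hyq : y ∈ q := by
    refine hqp.mem_of_pow_mem r ((hqw' _).2 ?_)
    rw [smul_comm _ b, smul_comm _ (a ^ N), hu]; simp
  have hqm : q = maximalIdeal A := by
    by_contra hc
    exact hy q hqM hc hyq
  have h1 := (hqw' a).1 (hqm ▸ ha)
  have h2 := hN b (N + 1) (by
    rw [← h1, pow_succ', mul_smul, smul_comm (a ^ N) b])
  exact hqp.ne_top ((Ideal.eq_top_iff_one q).2 ((hqw' 1).2 (by
    rw [one_smul, smul_comm, h2])))

/-- Along a map with `m`-torsion kernel, the only associated primes coming from elements in the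
image are those of the source and the maximal ideal. -/
lemma assoc_of_map {M N : Type u} [AddCommGroup M] [Module A M] [AddCommGroup N] [Module A N]
    (f : M →ₗ[A] N) (hf : ∀ u, f u = 0 → MT (A := A) u) (q : Ideal A) (hq : q.IsPrime)
    (w : M) (hw : ∀ a, a ∈ q ↔ a • f w = 0) (hqm : q ≠ maximalIdeal A) :
    q ∈ associatedPrimes A M := by
  obtain ⟨s, hs, hsq⟩ : ∃ s ∈ maximalIdeal A, s ∉ q := by
    by_contra! h
    exact hqm (le_antisymm (le_maximalIdeal hq.ne_top) h)
  obtain ⟨N, hN⟩ := exists_stab s w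
  refine assoc_iff.2 ⟨hq, s ^ N • w, fun a => ⟨fun ha => ?_, fun ha => ?_⟩⟩
  · obtain ⟨k, hk⟩ := hf (a • w) (by rw [map_smul]; exact (hw a).1 ha) s hs
    rw [smul_comm]; exact hN a k hk
  · have : a * s ^ N ∈ q := (hw _).2 (by rw [← map_smul, mul_smul, ha, map_zero])
    exact (hq.mem_or_mem this).resolve_right fun h => hsq (hq.mem_of_pow_mem _ h)

end Assoc

section Dual
variable {A : Type u} [CommRing A] [IsLocalRing A]

/-- `E` is injective with socle generated by the nonzero element `v`; the dual of `H` is then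
`H →ₗ[A] E`. -/
structure IsHull (E : Type u) [AddCommGroup E] [Module A E] (v : E) : Prop where
  inj : Module.Injective A E
  ne : v ≠ 0
  soc : ∀ a ∈ maximalIdeal A, a • v = 0
  gen : ∀ w : E, (∀ a ∈ maximalIdeal A, a • w = 0) → w ∈ Submodule.span A {v}

variable {E : Type u} [AddCommGroup E] [Module A E] {v : E}

lemma mt_finite_kill {H : Type u} [AddCommGroup H] [Module A H] [Module.Finite A H]
    (hH : ∀ h : H, MT (A := A) h) (a : A) (ha : a ∈ maximalIdeal A) :
    ∃ k : ℕ, ∀ h : H, a ^ k • h = 0 := by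
  obtain ⟨s, hs⟩ := (Module.finite_def.1 ‹Module.Finite A H›)
  choose k hk using fun h => hH h a ha
  refine ⟨s.sup k, fun h => ?_⟩
  have : h ∈ Submodule.span A (s : Set H) := hs ▸ Submodule.mem_top
  induction this using Submodule.span_induction with
  | mem h hh =>
    obtain ⟨d, hd⟩ := Nat.exists_eq_add_of_le (Finset.le_sup (f := k) hh)
    rw [hd, add_comm, pow_add, mul_smul, hk, smul_zero]
  | zero => simp
  | add x y _ _ hx hy => rw [smul_add, hx, hy, add_zero]
  | smul c x _ hx => rw [smul_comm, hx, smul_zero]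

lemma dual_mt {H : Type u} [AddCommGroup H] [Module A H] [Module.Finite A H]
    (hH : ∀ h : H, MT (A := A) h) (f : H →ₗ[A] E) : MT (A := A) f := by
  intro a ha
  obtain ⟨k, hk⟩ := mt_finite_kill hH a ha
  exact ⟨k, LinearMap.ext fun h => by rw [LinearMap.smul_apply, ← map_smul, hk, map_zero]; rfl⟩

variable [IsNoetherianRing A]

lemma mt_pow_kill {H : Type u} [AddCommGroup H] [Module A H] (h : H) (hh : MT (A := A) h) :
    ∃ n : ℕ, ∀ a ∈ maximalIdeal A ^ n, a • h = 0 := by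
  obtain ⟨n, hn⟩ := Ideal.exists_pow_le_of_le_radical_of_fg ((mt_iff h).1 hh)
    (IsNoetherian.noetherian (maximalIdeal A))
  exact ⟨n, fun a ha => (Ideal.mem_torsionOf_iff _ _).1 (hn ha)⟩

/-- The dual of a finitely generated `m`-torsion module is finitely generated: a prime filtration
reduces this to the residue field, whose dual is the socle of `E`. -/
lemma dual_finite (hE : IsHull (A := A) E v) (H : Type u) [AddCommGroup H] [Module A H]
    (hfin : Module.Finite A H) (hH : ∀ h : H, MT (A := A) h) : Module.Finite A (H →ₗ[A] E) := by
  revert hH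
  induction hfin using IsNoetherianRing.induction_on_isQuotientEquivQuotientPrime A with
  | subsingleton N =>
    intro _
    have : Subsingleton (N →ₗ[A] E) := ⟨fun f g => LinearMap.ext fun x => by
      rw [Subsingleton.elim x 0, map_zero, map_zero]⟩
    infer_instance
  | quotient N p e =>
    intro hN
    have hm : ∀ a ∈ maximalIdeal A, a ∈ p.1 := by
      intro a ha
      obtain ⟨k, hk⟩ := hN (e.symm 1) a ha
      rw [← map_smul, e.symm.map_eq_zero_iff, Algebra.smul_def, mul_one] at hk
      exact p.2.mem_of_pow_mem k (Ideal.Quotient.eq_zero_iff_mem.1 hk)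
    have hgen : ∀ n : N, ∃ a : A, n = a • e.symm 1 := by
      intro n
      obtain ⟨a, ha⟩ := Ideal.Quotient.mk_surjective (e n)
      refine ⟨a, e.injective ?_⟩
      rw [map_smul, e.apply_symm_apply, Algebra.smul_def, mul_one, ← ha]; rfl
    let F : (N →ₗ[A] E) →ₗ[A] Submodule.span A {v} :=
      { toFun := fun f => ⟨f (e.symm 1), hE.gen _ (by
          intro a ha
          rw [← map_smul, ← map_smul]
          have : a • (1 : A ⧸ p.1) = 0 := by
            rw [Algebra.smul_def, mul_one]; exact Ideal.Quotient.eq_zero_iff_mem.2 (hm a ha)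
          rw [this, map_zero, map_zero])⟩
        map_add' := fun f g => rfl
        map_smul' := fun c f => rfl }
    refine Module.Finite.of_injective F fun f g h => LinearMap.ext fun n => ?_
    obtain ⟨a, rfl⟩ := hgen n
    rw [map_smul, map_smul]
    exact congrArg (a • ·) (congrArg Subtype.val h)
  | exact N₁ N₂ N₃ f g hf hg hfg h₁ h₃ =>
    intro hN
    have f₁ := h₁ (fun h => mt_of_map f (fun u hu => by
      rw [(map_eq_zero_iff f hf).1 hu]; exact (Gam A N₁).zero_mem) h (hN _))
    have f₃ := h₃ (fun h => by obtain ⟨h, rfl⟩ := hg h; exact mt_map g h (hN h))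
    have hker : Module.Finite A (LinearMap.ker (LinearMap.lcomp A E f)) := by
      have : LinearMap.ker (LinearMap.lcomp A E f) ≤ LinearMap.range (LinearMap.lcomp A E g) := by
        intro φ hφ
        rw [LinearMap.mem_ker] at hφ
        have hk : LinearMap.ker g ≤ LinearMap.ker φ := by
          intro n hn
          obtain ⟨n, rfl⟩ := (hfg n).1 hn
          exact LinearMap.congr_fun hφ n
        let e := g.quotKerEquivOfSurjective hg
        refine ⟨((LinearMap.ker g).liftQ φ hk).comp e.symm.toLinearMap, ?_⟩
        ext n
        have : e.symm (g n) = Submodule.Quotient.mk n := by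
          rw [LinearEquiv.symm_apply_eq]; rfl
        change (LinearMap.ker g).liftQ φ hk (e.symm (g n)) = φ n
        rw [this]; rfl
      exact Module.Finite.of_injective (Submodule.inclusion this) (Submodule.inclusion_injective _)
    have hquot : Module.Finite A ((N₂ →ₗ[A] E) ⧸ LinearMap.ker (LinearMap.lcomp A E f)) :=
      Module.Finite.equiv (LinearMap.quotKerEquivRange (LinearMap.lcomp A E f)).symm
    exact Module.Finite.of_submodule_quotient (LinearMap.ker (LinearMap.lcomp A E f))

/-- The dual of an `m`-torsion module is `m`-adically separated, as each element of the module is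
killed by a power of `m`. -/
lemma dual_hausdorff {H : Type u} [AddCommGroup H] [Module A H]
    (hH : ∀ h : H, MT (A := A) h) : IsHausdorff (maximalIdeal A) (H →ₗ[A] E) := by
  refine ⟨fun f hf => LinearMap.ext fun h => ?_⟩
  obtain ⟨n, hn⟩ := mt_pow_kill h (hH h)
  have := hf n
  rw [SModEq.zero] at this
  clear hf
  induction this using Submodule.smul_induction_on' with
  | smul a ha g _ => rw [LinearMap.smul_apply, ← map_smul, hn a ha, map_zero]; rfl
  | add f _ g _ hf hg => rw [LinearMap.add_apply, hf, hg]; simp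

lemma isPrecomplete_pi (I : Ideal A) [IsPrecomplete I A] (n : ℕ) : IsPrecomplete I (Fin n → A) := by
  have key : ∀ (k : ℕ) (w : Fin n → A), w ∈ (I ^ k • ⊤ : Submodule A (Fin n → A)) ↔
      ∀ i, w i ∈ (I ^ k • ⊤ : Submodule A A) := by
    intro k w
    constructor
    · intro h i
      have := Submodule.mem_map_of_mem (f := LinearMap.proj (R := A) (φ := fun _ => A) i) h
      rw [Submodule.map_smul''] at this
      exact Submodule.smul_mono le_rfl le_top this
    · intro h
      rw [← Finset.univ_sum_single w]
      refine Submodule.sum_mem _ fun i _ => ?_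
      have h1 : Pi.single i (w i) = w i • (Pi.single i 1 : Fin n → A) := by
        rw [← Pi.single_smul]; simp
      rw [h1]
      refine Submodule.smul_mem_smul ?_ trivial
      have := h i
      rwa [smul_eq_mul, Ideal.mul_top] at this
  refine ⟨fun f hf => ?_⟩
  have : ∀ i, ∃ L : A, ∀ k, f k i ≡ L [SMOD (I ^ k • ⊤ : Submodule A A)] := by
    intro i
    refine IsPrecomplete.prec' (fun k => f k i) fun {a b} hab => ?_
    have := hf hab
    rw [SModEq.sub_mem, key] at this
    rw [SModEq.sub_mem]; exact this i
  choose L hL using this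
  refine ⟨L, fun k => ?_⟩
  rw [SModEq.sub_mem, key]
  intro i
  have := hL i k
  rwa [SModEq.sub_mem] at this

/-- Nakayama's lemma over a complete ring: a Hausdorff module which is finite modulo `m` is
finite. -/
lemma complete_nakayama [IsAdicComplete (maximalIdeal A) A] (K : Type u) [AddCommGroup K]
    [Module A K] [IsHausdorff (maximalIdeal A) K]
    (h : Module.Finite A (K ⧸ (maximalIdeal A • ⊤ : Submodule A K))) : Module.Finite A K := by
  obtain ⟨n, s, hs⟩ := Module.Finite.exists_fin (R := A)
    (M := K ⧸ (maximalIdeal A • ⊤ : Submodule A K))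
  choose r hr using fun i => Submodule.mkQ_surjective _ (s i)
  let f : (Fin n → A) →ₗ[A] K := Fintype.linearCombination A r
  have := isPrecomplete_pi (maximalIdeal A) n
  refine Module.Finite.of_surjective f (surjective_of_mkQ_comp_surjective (I := maximalIdeal A) ?_)
  rw [← LinearMap.range_eq_top, ← top_le_iff, ← hs, Submodule.span_le]
  rintro _ ⟨i, rfl⟩
  refine ⟨Pi.single i 1, ?_⟩
  rw [LinearMap.comp_apply, ← hr i]
  congr 1
  simp [f, Fintype.linearCombination_apply_single]

end Dual

/-! ### Finiteness of the dual of the torsion submodule -/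

section FiniteDual
variable {A : Type u} [CommRing A] [IsLocalRing A] [IsNoetherianRing A]

/-- The elements of `T (y :: ys) M` killed by `y` are images of elements of `T ys X`, where `X` is
the finitely generated kernel of `y` on `L_y M`; the map involved has `m`-torsion kernel. -/
lemma T_step (y : A) (ys : List A) (M : ModuleCat.{u} A) [Module.Finite A M]
    (h : FR (y :: ys) M) : ∃ (X : ModuleCat.{u} A) (j : T ys X →ₗ[A] T (y :: ys) M),
      Module.Finite A X ∧ FR ys X ∧ (∀ u, j u = 0 → MT (A := A) u) ∧
      ∀ u : T (y :: ys) M, y • u = 0 → ∃ w, j w = u := by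
  let g : Lq y M →ₗ[A] Lq y M := y • LinearMap.id
  let X := LinearMap.ker g
  have hX : Module.Finite A X := by
    have : X ≤ LinearMap.range (frac y 1 : M →ₗ[A] Lq y M) := fun l hl => Lq_ker_smul l hl
    exact Module.Finite.of_injective (Submodule.inclusion this) (Submodule.inclusion_injective _)
  have hex : Function.Exact X.subtype g := LinearMap.exact_subtype_ker_map g
  have hg : Function.Surjective g := fun l => Lq_smul_surj l
  have hker : ∀ u, X.subtype u = 0 → MT (A := A) u := fun u hu => by
    rw [(map_eq_zero_iff _ X.injective_subtype).1 hu]; exact (Gam A X).zero_mem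
  refine ⟨ModuleCat.of A X, Tmap ys (M := ModuleCat.of A X) (N := ModuleCat.of A (Lq y M))
    X.subtype, hX, ?_, ?_, ?_⟩
  · exact FR_ker ys (N := ModuleCat.of A X) (M := ModuleCat.of A (Lq y M))
      (B := ModuleCat.of A (Lq y M)) X.subtype g hex hg hker h.2 h.2
  · exact Tmap_ker_mt ys (N := ModuleCat.of A X) (M := ModuleCat.of A (Lq y M))
      (B := ModuleCat.of A (Lq y M)) X.subtype g hex hg hker h.2
  · intro u hu
    refine (Tmap_exact ys (N := ModuleCat.of A X) (M := ModuleCat.of A (Lq y M))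
      (B := ModuleCat.of A (Lq y M)) hex hg u).1 ?_
    exact (Tmap_smul_id ys (M := ModuleCat.of A (Lq y M)) y u).trans hu

/-- By induction along `T_step`, an associated prime of `T ys M` is either `m` or an associated
prime of a finitely generated module; this makes prime avoidance available in `choose_FR`. -/
lemma assoc_T_finite (ys : List A) (M : ModuleCat.{u} A) [Module.Finite A M] (h : FR ys M) :
    (associatedPrimes A (T ys M)).Finite := by
  induction ys generalizing M with
  | nil => exact associatedPrimes.finite A M
  | cons y ys ih =>
    obtain ⟨X, j, hX, hFR, hj, hsurj⟩ := T_step y ys M h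
    refine ((ih X hFR).union (Set.finite_singleton (maximalIdeal A))).subset ?_
    intro q hq
    obtain ⟨hqp, u, hu⟩ := assoc_iff.1 hq
    by_cases hqm : q = maximalIdeal A
    · exact Or.inr hqm
    left
    obtain ⟨k, hk⟩ := T_nilp (y :: ys) u y (Ideal.subset_span (by simp))
    obtain ⟨w, rfl⟩ := hsurj u ((hu y).1 (hqp.mem_of_pow_mem k ((hu _).2 hk)))
    exact assoc_of_map j hj q hqp w hu hqm

variable {E : Type u} [AddCommGroup E] [Module A E] {v : E}

/-- For `M` finitely generated and filter-regular along `ys`, the dual `K` of the `m`-torsion of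
`T ys M` is finitely generated, and its support meets `V(ys)` at most in `m`. Inductively, `T_step`
shows that `K / yK` is a subquotient of the corresponding dual for the shorter list,
so `K` is finite modulo `m`, and `complete_nakayama` applies. -/
lemma dual_T [IsAdicComplete (maximalIdeal A) A] (hE : IsHull (A := A) E v) (ys : List A)
    (hys : ∀ y ∈ ys, y ∈ maximalIdeal A) (M : ModuleCat.{u} A) [Module.Finite A M] (h : FR ys M) :
    Module.Finite A (Gam A (T ys M) →ₗ[A] E) ∧
    ∀ p ∈ Module.support A (Gam A (T ys M) →ₗ[A] E), (∀ y ∈ ys, y ∈ p.asIdeal) →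
      p.asIdeal = maximalIdeal A := by
  have hGmt : ∀ (N : Type u) [AddCommGroup N] [Module A N], ∀ h : Gam A N, MT (A := A) h := by
    intro N _ _ h a ha
    obtain ⟨k, hk⟩ := h.2 a ha
    exact ⟨k, Subtype.ext hk⟩
  induction ys generalizing M with
  | nil =>
    have hf : Module.Finite A (Gam A M) := inferInstance
    refine ⟨dual_finite hE (Gam A M) hf (hGmt M), ?_⟩
    intro p hp _
    obtain ⟨f, hf⟩ := Module.mem_support_iff_exists_annihilator.1 hp
    refine le_antisymm (le_maximalIdeal p.2.ne_top) fun a ha => ?_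
    obtain ⟨k, hk⟩ := dual_mt (hGmt M) f a ha
    exact p.2.mem_of_pow_mem k (hf ((Submodule.mem_annihilator_span_singleton _ _).2 hk))
  | cons y ys ih =>
    obtain ⟨X, j, hX, hFR, hj, hsurj⟩ := T_step y ys M h
    obtain ⟨ihf, ihs⟩ := ih (fun y hy => hys y (by simp [hy])) X hFR
    set H := Gam A (T (y :: ys) M)
    let r : Gam A (T ys X) →ₗ[A] H := j.restrict (fun u hu => mt_map j u hu)
    let R := LinearMap.lcomp A E r
    have hker : LinearMap.ker R ≤ Ideal.span {y} • ⊤ := by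
      intro f hf
      let g : H →ₗ[A] H := y • LinearMap.id
      have hk : LinearMap.ker g ≤ LinearMap.ker f := by
        intro u hu
        obtain ⟨w, hw⟩ := hsurj u.1 (congrArg Subtype.val (show y • u = 0 from hu))
        have hwm : w ∈ Gam A (T ys X) := mt_of_map j hj w (by rw [hw]; exact u.2)
        have : u = r ⟨w, hwm⟩ := Subtype.ext hw.symm
        rw [this]
        exact LinearMap.congr_fun (show R f = 0 from hf) ⟨w, hwm⟩
      obtain ⟨e, he⟩ := hE.inj.out ((LinearMap.ker g).liftQ g le_rfl)
        (by rw [← LinearMap.ker_eq_bot]; exact Submodule.ker_liftQ_eq_bot _ _ _ le_rfl)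
        ((LinearMap.ker g).liftQ f hk)
      have : f = y • e := by
        ext u
        have := he (Submodule.Quotient.mk u)
        rw [Submodule.liftQ_apply, Submodule.liftQ_apply] at this
        rw [← this]
        exact map_smul e y u
      rw [this]
      exact Submodule.smul_mem_smul (Ideal.mem_span_singleton_self y) trivial
    have hfk : Module.Finite A ((H →ₗ[A] E) ⧸ LinearMap.ker R) :=
      Module.Finite.equiv (LinearMap.quotKerEquivRange R).symm
    have hyle : (Ideal.span {y} • ⊤ : Submodule A (H →ₗ[A] E)) ≤ maximalIdeal A • ⊤ :=
      Submodule.smul_mono ((Ideal.span_singleton_le_iff_mem _).2 (hys y (by simp))) le_rfl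
    have hfin : Module.Finite A (H →ₗ[A] E) := by
      have := dual_hausdorff (E := E) (hGmt (T (y :: ys) M))
      refine complete_nakayama _ (Module.Finite.of_surjective
        (Submodule.factor (hker.trans hyle)) (Submodule.factor_surjective _))
    refine ⟨hfin, fun p hp hyp => ihs p ?_ fun z hz => hyp z (by simp [hz])⟩
    have h1 : p ∈ Module.support A ((H →ₗ[A] E) ⧸
        (Ideal.span {y} • ⊤ : Submodule A (H →ₗ[A] E))) := by
      rw [Module.support_quotient]
      exact ⟨hp, by
        rw [PrimeSpectrum.zeroLocus_span, PrimeSpectrum.mem_zeroLocus, Set.singleton_subset_iff]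
        exact hyp y (by simp)⟩
    have h2 := Module.support_subset_of_surjective (Submodule.factor hker)
      (Submodule.factor_surjective _) h1
    exact Module.support_subset_of_injective ((LinearMap.ker R).liftQ R le_rfl)
      (by rw [← LinearMap.ker_eq_bot]; exact Submodule.ker_liftQ_eq_bot _ _ _ le_rfl) h2

end FiniteDual

/-! ### Choosing a filter-regular system of parameters -/

section Choose
variable {A : Type u} [CommRing A]

lemma kills_T_of_kills (c : A) (ys : List A) (M : ModuleCat.{u} A) (h : Kills c M) :
    Kills c (T ys M) := by
  intro u
  have h0 : c • (LinearMap.id : M →ₗ[A] M) = (0 : A) • LinearMap.id := by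
    refine LinearMap.ext fun m => ?_
    rw [LinearMap.smul_apply, LinearMap.smul_apply, zero_smul]
    exact h m
  rw [← Tmap_smul_id, h0, Tmap_smul_id, zero_smul]

variable [IsLocalRing A] [IsNoetherianRing A]

/-- A list `xs` can be modified, without changing the ideal and the annihilation of `T`, so that
`M` satisfies `FR`: each new element avoids the associated primes different from the maximal
ideal of the module reached so far. -/
lemma choose_FR (I : Ideal A) (M : ModuleCat.{u} A) [Module.Finite A M]
    (hI : ∀ a ∈ I, Kills a M) (z : A) (hz : z ∈ maximalIdeal A) (xs ys : List A)
    (hxs : ∀ x ∈ xs, x ∈ maximalIdeal A)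
    (hm : maximalIdeal A ≤ (I ⊔ Ideal.span {w | w ∈ ys ++ xs ++ [z]}).radical)
    (hys : ∀ y ∈ ys, y ∈ maximalIdeal A)
    (hFR : FR ys M) :
    ∃ ys' : List A, ys'.length = xs.length ∧ (∀ y ∈ ys', y ∈ maximalIdeal A) ∧
      FR (ys ++ ys') M ∧
      Ideal.span {w | w ∈ ys ++ ys' ++ [z]} = Ideal.span {w | w ∈ ys ++ xs ++ [z]} ∧
      ∀ (c : A) (N : ModuleCat.{u} A), Kills c (T (ys ++ xs ++ [z]) N) →
        Kills c (T (ys ++ ys' ++ [z]) N) := by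
  induction xs generalizing ys with
  | nil => exact ⟨[], rfl, by simp, by simpa using hFR, rfl, fun _ _ h => h⟩
  | cons x xs ih =>
    have hfin := assoc_T_finite ys M hFR
    have hspan : ∀ y : A, Ideal.span {w | w ∈ ys ++ (y :: xs) ++ [z]} =
        Ideal.span {y} ⊔ Ideal.span {w | w ∈ ys ++ xs ++ [z]} := by
      intro y
      rw [← Ideal.span_union]
      congr 1
      ext w
      simp only [List.mem_append, List.mem_cons, Set.mem_ofPred_eq, Set.mem_union,
        Set.mem_singleton_iff]
      tauto
    obtain ⟨a, ha, hav⟩ := exists_coset_avoid x (Ideal.span {w | w ∈ ys ++ xs ++ [z]})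
      (hfin.subset (Set.sdiff_subset (t := {maximalIdeal A}))).toFinset
      (by
        intro q hq
        rw [Set.Finite.mem_toFinset] at hq
        exact (assoc_iff.1 hq.1).1)
      (by
        intro q hq hxq hle
        rw [Set.Finite.mem_toFinset] at hq
        obtain ⟨hqp, u, hu⟩ := assoc_iff.1 hq.1
        refine hq.2 (le_antisymm (le_maximalIdeal hqp.ne_top) ?_)
        refine hm.trans ((Ideal.radical_mono (sup_le ?_ ?_)).trans hqp.radical.le)
        · intro b hb
          exact (hu b).2 (kills_T_of_kills b ys M (hI b hb) u)
        · rw [hspan]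
          exact sup_le ((Ideal.span_singleton_le_iff_mem _).2 hxq) hle)
    have ham : a ∈ maximalIdeal A := by
      refine (Ideal.span_le.2 ?_ : Ideal.span {w | w ∈ ys ++ xs ++ [z]} ≤ _) ha
      intro w hw
      simp only [List.mem_append, Set.mem_ofPred_eq, List.mem_singleton] at hw
      rcases hw with (h | h) | rfl
      · exact hys w h
      · exact hxs w (by simp [h])
      · exact hz
    have hym : x + a ∈ maximalIdeal A := Ideal.add_mem _ (hxs x (by simp)) ham
    have hspan' : Ideal.span {w | w ∈ ys ++ ((x + a) :: xs) ++ [z]} =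
        Ideal.span {w | w ∈ ys ++ (x :: xs) ++ [z]} := by
      rw [hspan, hspan]
      refine le_antisymm (sup_le ?_ le_sup_right) (sup_le ?_ le_sup_right)
      · rw [Ideal.span_singleton_le_iff_mem]
        exact Ideal.add_mem _ (Ideal.mem_sup_left (Ideal.mem_span_singleton_self x))
          (Ideal.mem_sup_right ha)
      · rw [Ideal.span_singleton_le_iff_mem]
        have : x = (x + a) - a := by ring
        nth_rewrite 2 [this]
        exact Ideal.sub_mem _ (Ideal.mem_sup_left (Ideal.mem_span_singleton_self _))
          (Ideal.mem_sup_right ha)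
    have hlist : ∀ l : List A, ys ++ [x + a] ++ l ++ [z] = ys ++ ((x + a) :: l) ++ [z] := by simp
    obtain ⟨ys', hlen, hin, hFR', hsp, hK⟩ := ih (ys ++ [x + a])
      (fun x hx => hxs x (by simp [hx]))
      (by rw [hlist, hspan']; exact hm)
      (by
        intro y hy
        rcases List.mem_append.1 hy with h | h
        · exact hys y h
        · rw [List.mem_singleton.1 h]; exact hym)
      (by
        rw [FR_append]
        refine ⟨hFR, ⟨fun u ⟨k, hk⟩ => mt_of_avoid (x + a) ?_ u k hk, trivial⟩⟩
        intro q hq hqm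
        exact hav q (by rw [Set.Finite.mem_toFinset]; exact ⟨hq, hqm⟩))
    refine ⟨(x + a) :: ys', by simp [hlen], ?_, ?_, ?_, ?_⟩
    · intro y hy
      rcases List.mem_cons.1 hy with rfl | h
      · exact hym
      · exact hin y h
    · simpa using hFR'
    · rw [← hlist, hsp, hlist, hspan']
    · intro c N h
      rw [← hlist]
      refine hK c N ?_
      rw [hlist]
      have hperm : ∀ y : A, (ys ++ (y :: xs) ++ [z]).Perm ((ys ++ xs ++ [z]) ++ [y]) := by
        intro y
        simp only [List.append_assoc, List.cons_append]
        refine List.Perm.append_left ys ?_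
        have h1 := (List.perm_append_singleton y (xs ++ [z])).symm
        rw [List.append_assoc] at h1
        exact h1
      rw [kills_T_perm c (hperm _)]
      rw [kills_T_perm c (hperm _)] at h
      exact kills_T_transform c _ x a ha N h

end Choose

/-! ### Dimension bounds and faithfulness of the dual -/

section Dimension
variable {A : Type u} [CommRing A] [IsLocalRing A] [IsNoetherianRing A]

/-- Cutting by one element of the maximal ideal lowers the dimension by at most one. -/
lemma dim_rise (I : Ideal A) (y : A) (hy : y ∈ maximalIdeal A) :
    ringKrullDim (A ⧸ I) ≤ ringKrullDim (A ⧸ (I ⊔ Ideal.span {y})) + 1 := by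
  by_cases hI : I = ⊤
  · have : Subsingleton (A ⧸ I) := Ideal.Quotient.subsingleton_iff.2 hI
    rw [ringKrullDim_eq_bot_of_subsingleton]; exact bot_le
  have : Nontrivial (A ⧸ I) := Ideal.Quotient.nontrivial_iff.2 hI
  have hloc : IsLocalRing (A ⧸ I) := IsLocalRing.of_surjective' (Ideal.Quotient.mk I)
    Ideal.Quotient.mk_surjective
  have hlh : IsLocalHom (Ideal.Quotient.mk I) := IsLocalHom.of_surjective _
    Ideal.Quotient.mk_surjective
  have h1 := ringKrullDim_le_ringKrullDim_quotient_add_encard (R := A ⧸ I)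
    {Ideal.Quotient.mk I y} (by
      rw [Set.singleton_subset_iff, IsLocalRing.ringJacobson_eq_maximalIdeal]
      change Ideal.Quotient.mk I y ∈ maximalIdeal _
      rw [mem_maximalIdeal, mem_nonunits_iff]
      exact fun h => hy (isUnit_of_map_unit _ _ h))
  have h2 : Ideal.span {Ideal.Quotient.mk I y} = (Ideal.span {y}).map (Ideal.Quotient.mk I) := by
    rw [Ideal.map_span, Set.image_singleton]
  have h3 := ringKrullDim_eq_of_ringEquiv (DoubleQuot.quotQuotEquivQuotSup I (Ideal.span {y}))
  rw [h2, h3] at h1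
  simpa using h1

/-- The dimension is at most the number of elements generating an `m`-primary ideal. -/
lemma dim_le_of_rad (xs : List A) (hxs : ∀ x ∈ xs, x ∈ maximalIdeal A) (I : Ideal A)
    (hm : maximalIdeal A ≤ (I ⊔ Ideal.span {x | x ∈ xs}).radical) :
    ringKrullDim (A ⧸ I) ≤ xs.length := by
  induction xs generalizing I with
  | nil =>
    rw [ringKrullDim_quotient]
    have : Subsingleton (PrimeSpectrum.zeroLocus (R := A) I) := by
      have h : ∀ p : PrimeSpectrum.zeroLocus (R := A) I, p.1.asIdeal = maximalIdeal A := by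
        intro p
        refine le_antisymm (le_maximalIdeal p.1.2.ne_top) (hm.trans ?_)
        refine (Ideal.radical_mono (sup_le p.2 ?_)).trans p.1.2.radical.le
        rw [Ideal.span_le]
        intro z hz
        simp at hz
      exact ⟨fun p q => Subtype.ext (PrimeSpectrum.ext ((h p).trans (h q).symm))⟩
    exact_mod_cast Order.krullDim_nonpos_of_subsingleton
  | cons x xs ih =>
    have h1 := ih (fun y hy => hxs y (by simp [hy])) (I ⊔ Ideal.span {x}) (by
      refine hm.trans (Ideal.radical_mono ?_)
      rw [sup_assoc, ← Ideal.span_union]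
      refine sup_le_sup le_rfl (Ideal.span_mono ?_)
      intro z hz
      rcases List.mem_cons.1 hz with rfl | hz
      · exact Or.inl rfl
      · exact Or.inr hz)
    refine (dim_rise I x (hxs x (by simp))).trans ?_
    rw [List.length_cons]
    push_cast
    gcongr

/-- The dimension of `A ⧸ J` is attained, or exceeded, on a prime containing `J`. -/
lemma exists_prime_dim (J : Ideal A) (n : ℕ) (h : n ≤ ringKrullDim (A ⧸ J)) :
    ∃ P : Ideal A, P.IsPrime ∧ J ≤ P ∧ n ≤ ringKrullDim (A ⧸ P) := by
  rw [ringKrullDim_quotient] at h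
  obtain ⟨l, hl⟩ := Order.le_krullDim_iff.1 h
  refine ⟨l.head.1.asIdeal, l.head.1.2, l.head.2, ?_⟩
  rw [ringKrullDim_quotient]
  refine Order.le_krullDim_iff.2 ⟨⟨l.length, fun i => ⟨(l i).1, ?_⟩, fun i => l.step i⟩, hl⟩
  exact LTSeries.head_le l i

end Dimension

section TorsionFree
variable {A : Type u} [CommRing A] [IsLocalRing A] [IsNoetherianRing A]
variable {E : Type u} [AddCommGroup E] [Module A E] {v : E}

/-- A nonzero `m`-torsion module contains a copy of the residue field, hence has a nonzero dual. -/
lemma exists_dual_ne (hE : IsHull (A := A) E v) {H : Type u} [AddCommGroup H] [Module A H]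
    (hH : ∀ h : H, MT (A := A) h) (h : H) (h0 : h ≠ 0) : ∃ f : H →ₗ[A] E, f ≠ 0 := by
  have : Nontrivial H := ⟨⟨h, 0, h0⟩⟩
  obtain ⟨q, hq⟩ := associatedPrimes.nonempty A H
  obtain ⟨hqp, w, hw⟩ := assoc_iff.1 hq
  have hqm : q = maximalIdeal A := by
    refine le_antisymm (le_maximalIdeal hqp.ne_top) fun a ha => ?_
    obtain ⟨k, hk⟩ := hH w a ha
    exact hqp.mem_of_pow_mem k ((hw _).2 hk)
  subst hqm
  let i : (A ⧸ maximalIdeal A) →ₗ[A] H :=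
    Submodule.liftQ _ (LinearMap.toSpanSingleton A H w) (fun a ha => (hw a).1 ha)
  let j : (A ⧸ maximalIdeal A) →ₗ[A] E :=
    Submodule.liftQ _ (LinearMap.toSpanSingleton A E v) (fun a ha => hE.soc a ha)
  obtain ⟨f, hf⟩ := hE.inj.out i (by
    rw [← LinearMap.ker_eq_bot]
    exact Submodule.ker_liftQ_eq_bot _ _ _ (fun a ha => (hw a).2 ha)) j
  refine ⟨f, fun h => hE.ne ?_⟩
  have := hf (Submodule.Quotient.mk 1)
  rw [h] at this
  have h2 : j (Submodule.Quotient.mk 1) = (1 : A) • v := rfl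
  rw [h2, one_smul] at this
  exact this.symm

/-- Elements of `T xs M` are `m`-torsion once an ideal `I`, `m`-primary together with `xs`, acts
nilpotently on them. -/
lemma T_mt (xs : List A) (I : Ideal A) (M : ModuleCat.{u} A) (u : T xs M)
    (hI : ∀ a ∈ I, ∃ k : ℕ, a ^ k • u = 0)
    (hm : maximalIdeal A ≤ (I ⊔ Ideal.span {x | x ∈ xs}).radical) : MT (A := A) u := by
  rw [mt_iff]
  refine hm.trans (Ideal.radical_le_radical_iff.2 (sup_le ?_ ?_))
  · exact fun a ha => (mem_radical_torsionOf_iff u a).2 (hI a ha)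
  · exact fun a ha => (mem_radical_torsionOf_iff u a).2 (T_nilp xs u a ha)

lemma kills_quot (I : Ideal A) (a : A) (ha : a ∈ I) : Kills a (ModuleCat.of A (A ⧸ I)) := by
  intro u
  obtain ⟨b, rfl⟩ := Ideal.Quotient.mk_surjective (I := I) u
  change a • Ideal.Quotient.mk I b = 0
  rw [Algebra.smul_def]
  exact (map_mul _ _ _).symm.trans (Ideal.Quotient.eq_zero_iff_mem.2 (I.mul_mem_right b ha))

/-- The dual of the top module `T xs (A ⧸ P)` is torsion-free over `A ⧸ P`: an element outside
`P` acts surjectively on `T xs (A ⧸ P)`, since the cokernel vanishes for dimension reasons. -/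
lemma dual_torsionFree (P : Ideal A) [hP : P.IsPrime] (xs : List A)
    (hdim : ringKrullDim (A ⧸ P) = xs.length) (hxs : ∀ x ∈ xs, x ∈ maximalIdeal A)
    (hm : maximalIdeal A ≤ (P ⊔ Ideal.span {x | x ∈ xs}).radical)
    (f : T xs (ModuleCat.of A (A ⧸ P)) →ₗ[A] E) (hf : f ≠ 0) (a : A) : a ∈ P ↔ a • f = 0 := by
  constructor
  · intro ha
    refine LinearMap.ext fun u => ?_
    rw [LinearMap.smul_apply, ← map_smul, kills_T_of_kills a xs _ (kills_quot P a ha) u, map_zero]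
    rfl
  · intro ha
    by_contra haP
    apply hf
    have hv := T_vanish xs (P ⊔ Ideal.span {a})
      (dim_drop P a (fun q hq => by
        rw [Ideal.minimalPrimes_eq_subsingleton_self] at hq
        rwa [Set.mem_singleton_iff.1 hq]) _ (by
          rw [hdim]; exact_mod_cast Nat.lt_succ_self _)) hxs
      (hm.trans (Ideal.radical_mono (sup_le_sup le_sup_left le_rfl)))
    let p : (A ⧸ P) →ₗ[A] (A ⧸ (P ⊔ Ideal.span {a})) := Submodule.factor le_sup_left
    have hex : Function.Exact (a • (LinearMap.id : (A ⧸ P) →ₗ[A] (A ⧸ P))) p := by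
      intro w
      obtain ⟨b, rfl⟩ := Submodule.mkQ_surjective _ w
      constructor
      · intro h
        have hb : b ∈ P ⊔ Ideal.span {a} := (Submodule.Quotient.mk_eq_zero _).1 h
        obtain ⟨c, hc, d, hd, rfl⟩ := Submodule.mem_sup.1 hb
        obtain ⟨d, rfl⟩ := Ideal.mem_span_singleton'.1 hd
        refine ⟨Submodule.Quotient.mk d, ?_⟩
        change a • (Submodule.Quotient.mk d : A ⧸ P) = Submodule.Quotient.mk (c + d * a)
        rw [← Submodule.Quotient.mk_smul, Submodule.Quotient.eq]
        have : a • d - (c + d * a) = -c := by rw [smul_eq_mul]; ring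
        rw [this]; exact neg_mem hc
      · rintro ⟨w, hw⟩
        rw [← hw]
        obtain ⟨d, rfl⟩ := Submodule.mkQ_surjective _ w
        change (Submodule.Quotient.mk (a • d) : A ⧸ (P ⊔ Ideal.span {a})) = 0
        rw [Submodule.Quotient.mk_eq_zero, smul_eq_mul]
        exact Ideal.mul_mem_right _ _ (Ideal.mem_sup_right (Ideal.mem_span_singleton_self a))
    refine LinearMap.ext fun u => ?_
    obtain ⟨w, hw⟩ := (Tmap_exact xs (N := ModuleCat.of A (A ⧸ P)) (M := ModuleCat.of A (A ⧸ P))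
      (B := ModuleCat.of A (A ⧸ (P ⊔ Ideal.span {a}))) hex
      (Submodule.factor_surjective _) u).1 (by
        rw [← hv (Tmap xs _ u), one_smul])
    rw [← hw, Tmap_smul_id, map_smul]
    exact LinearMap.congr_fun ha w

end TorsionFree

/-! ### Nonvanishing over `A ⧸ P` -/

section NonVanishing
variable {A : Type u} [CommRing A] [IsLocalRing A] [IsNoetherianRing A]
  [IsAdicComplete (maximalIdeal A) A]
variable {E : Type u} [AddCommGroup E] [Module A E] {v : E}

lemma support_of_assoc {K : Type*} [AddCommGroup K] [Module A K] {q : Ideal A}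
    (hq : q ∈ associatedPrimes A K) :
    (⟨q, (assoc_iff.1 hq).1⟩ : PrimeSpectrum A) ∈ Module.support A K := by
  obtain ⟨_, f, hf⟩ := assoc_iff.1 hq
  exact Module.mem_support_iff_exists_annihilator.2 ⟨f, fun a ha =>
    (hf a).2 ((Submodule.mem_annihilator_span_singleton _ _).1 ha)⟩

lemma span_append_singleton (ys : List A) (z : A) :
    Ideal.span {w | w ∈ ys ++ [z]} = Ideal.span {w | w ∈ ys} ⊔ Ideal.span {z} := by
  rw [← Ideal.span_union]
  congr 1
  ext w
  simp [or_comm]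

lemma le_of_add_one_le_add_one {n : ℕ} {x : WithBot ℕ∞} (h : (n : WithBot ℕ∞) + 1 ≤ x + 1) :
    (n : WithBot ℕ∞) ≤ x := by
  induction x using WithBot.recBotCoe with
  | bot => simp at h
  | coe x =>
    induction x using ENat.recTopCoe with
    | top => exact_mod_cast le_top
    | coe x =>
      have hle : n + 1 ≤ x + 1 := by exact_mod_cast h
      exact_mod_cast Nat.le_of_succ_le_succ hle

/-- Grothendieck nonvanishing for `A ⧸ P`, with `xs` a system of parameters of `A ⧸ P`. The
induction on the dimension `n + 1` runs as follows. Replace `xs` by `ys ++ [z]` with `ys`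
filter-regular and `z` outside the associated primes different from `m` of the dual `K` of the
`m`-torsion of `T ys (A ⧸ P)`. If `L_z (T ys (A ⧸ P)) = 0`, then this `m`-torsion surjects onto
`T ys (A ⧸ P')` for a prime `P'` containing `P` and `z` with `dim A ⧸ P' = n`; the latter module
is nonzero by induction with torsion-free dual, so `P'` is an associated prime of `K` containing
`z`. Thus `P' = m` and `n = 0`, where `A ⧸ P` would have nonzero `m`-torsion. -/
lemma T_ne_zero (hE : IsHull (A := A) E v) (n : ℕ) : ∀ (P : Ideal A) [P.IsPrime],
    ringKrullDim (A ⧸ P) = n → ∀ xs : List A, xs.length = n → (∀ x ∈ xs, x ∈ maximalIdeal A) →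
    maximalIdeal A ≤ (P ⊔ Ideal.span {x | x ∈ xs}).radical →
    ¬ Kills 1 (T xs (ModuleCat.of A (A ⧸ P))) := by
  induction n with
  | zero =>
    intro P hP _ xs hxs _ _ hK
    rw [List.length_eq_zero_iff] at hxs
    subst hxs
    have h1 : (1 : A) • (1 : A ⧸ P) = 0 := hK (1 : A ⧸ P)
    rw [one_smul] at h1
    exact one_ne_zero h1
  | succ n ih =>
    intro P hP hdim xs hlen hxs hm hK
    obtain ⟨xs', x, rfl⟩ : ∃ xs' x, xs = xs' ++ [x] := by
      rcases List.eq_nil_or_concat xs with rfl | ⟨l, b, rfl⟩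
      · simp at hlen
      · exact ⟨l, b, by simp⟩
    have hlen' : xs'.length = n := by simpa using hlen
    have hx : x ∈ maximalIdeal A := hxs x (by simp)
    obtain ⟨ys, hys, hysm, hFR, hspan, htr⟩ := choose_FR P (ModuleCat.of A (A ⧸ P))
      (kills_quot P) x hx xs' [] (fun x hx => hxs x (by simp [hx])) (by simpa using hm) (by simp)
      trivial
    simp only [List.nil_append] at hFR hspan htr
    have hK1 := htr 1 _ hK
    obtain ⟨hfin, hsupp⟩ := dual_T hE ys hysm (ModuleCat.of A (A ⧸ P)) hFR
    set T' := T ys (ModuleCat.of A (A ⧸ P)) with hT'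
    have hassfin := associatedPrimes.finite A (Gam A T' →ₗ[A] E)
    obtain ⟨a, ha, hav⟩ := exists_coset_avoid x (Ideal.span {w | w ∈ ys})
      (hassfin.subset (Set.sdiff_subset (t := {maximalIdeal A}))).toFinset
      (by
        intro q hq
        rw [Set.Finite.mem_toFinset] at hq
        exact (assoc_iff.1 hq.1).1)
      (by
        intro q hq _ hle
        rw [Set.Finite.mem_toFinset] at hq
        exact hq.2 (hsupp _ (support_of_assoc hq.1) fun y hy => hle (Ideal.subset_span hy)))
    set z := x + a with hz
    have hK2 := kills_T_transform 1 ys x a ha _ hK1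
    rw [← hz, T_append, ← hT'] at hK2
    have hzero : ∀ l : Lq z T', l = 0 := fun l => by
      have : (1 : A) • l = 0 := hK2 l
      rwa [one_smul] at this
    have ham : a ∈ maximalIdeal A := (Ideal.span_le.2 hysm) ha
    have hzm : z ∈ maximalIdeal A := Ideal.add_mem _ hx ham
    have hspanz : Ideal.span {w | w ∈ ys} ⊔ Ideal.span {x} ≤
        Ideal.span {w | w ∈ ys} ⊔ Ideal.span {z} := by
      refine sup_le le_sup_left ((Ideal.span_singleton_le_iff_mem _).2 ?_)
      have : x = z - a := by rw [hz]; ring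
      rw [this]
      exact Ideal.sub_mem _ (Ideal.mem_sup_right (Ideal.mem_span_singleton_self z))
        (Ideal.mem_sup_left ha)
    have hmz : maximalIdeal A ≤ ((P ⊔ Ideal.span {z}) ⊔ Ideal.span {w | w ∈ ys}).radical := by
      refine hm.trans (Ideal.radical_mono ?_)
      rw [← hspan, span_append_singleton, sup_assoc, sup_comm (Ideal.span {z})]
      exact sup_le_sup le_rfl hspanz
    obtain ⟨P', hP', hle, hdim'⟩ := exists_prime_dim (P ⊔ Ideal.span {z}) n (by
      have h1 := dim_rise P z hzm
      rw [hdim] at h1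
      push_cast at h1
      exact le_of_add_one_le_add_one h1)
    have hm' : maximalIdeal A ≤ (P' ⊔ Ideal.span {w | w ∈ ys}).radical :=
      hmz.trans (Ideal.radical_mono (sup_le_sup hle le_rfl))
    have hdim'' : ringKrullDim (A ⧸ P') = n := by
      refine le_antisymm ?_ hdim'
      have := dim_le_of_rad ys hysm P' hm'
      rwa [hys, hlen'] at this
    have hne := ih P' hdim'' ys (hys.trans hlen') hysm hm'
    have hmt : ∀ u : T ys (ModuleCat.of A (A ⧸ P')), MT (A := A) u := fun u =>
      T_mt ys P' _ u (fun a ha => ⟨1, by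
        rw [pow_one]; exact kills_T_of_kills a ys _ (kills_quot P' a ha) u⟩) hm'
    obtain ⟨u₀, hu₀⟩ : ∃ u : T ys (ModuleCat.of A (A ⧸ P')), u ≠ 0 := by
      by_contra! h
      exact hne fun u => by rw [one_smul]; exact h u
    obtain ⟨f₀, hf₀⟩ := exists_dual_ne hE hmt u₀ hu₀
    have hann := dual_torsionFree P' ys (by rw [hdim'', hys, hlen']) hysm hm' f₀ hf₀
    let π : T' →ₗ[A] T ys (ModuleCat.of A (A ⧸ P')) :=
      Tmap ys (M := ModuleCat.of A (A ⧸ P)) (N := ModuleCat.of A (A ⧸ P'))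
        (Submodule.factor (le_sup_left.trans hle))
    have hπ : Function.Surjective π := Tmap_surj ys (Submodule.factor_surjective _)
    have hzP' : z ∈ P' := hle (Ideal.mem_sup_right (Ideal.mem_span_singleton_self z))
    have hπG : ∀ t, ∃ w : Gam A T', π w = t := by
      intro t
      obtain ⟨u, rfl⟩ := hπ t
      obtain ⟨j, m, hj⟩ := (frac_eq_zero_iff (y := z) 1 u).1 (hzero _)
      have hw : z ^ j • (u - z • m) = 0 := by
        rw [smul_sub, hj, smul_smul, ← pow_succ, sub_self]
      refine ⟨⟨u - z • m, ?_⟩, ?_⟩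
      · refine T_mt ys (P ⊔ Ideal.span {z}) _ _ ?_ hmz
        intro b hb
        rw [← mem_radical_torsionOf_iff]
        revert b
        change P ⊔ Ideal.span {z} ≤ _
        refine sup_le ?_ ((Ideal.span_singleton_le_iff_mem _).2 ?_)
        · intro b hb
          rw [mem_radical_torsionOf_iff]
          exact ⟨1, by rw [pow_one]; exact kills_T_of_kills b ys _ (kills_quot P b hb) _⟩
        · rw [mem_radical_torsionOf_iff]
          exact ⟨j, hw⟩
      · change π (u - z • m) = π u
        rw [map_sub, map_smul, kills_T_of_kills z ys _ (kills_quot P' z hzP') (π m), sub_zero]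
    have hassoc : P' ∈ associatedPrimes A (Gam A T' →ₗ[A] E) := by
      refine assoc_iff.2 ⟨hP', f₀.comp (π.comp (Gam A T').subtype), fun b => ?_⟩
      rw [hann b]
      constructor
      · intro h
        refine LinearMap.ext fun w => ?_
        exact LinearMap.congr_fun h (π w)
      · intro h
        refine LinearMap.ext fun t => ?_
        obtain ⟨w, rfl⟩ := hπG t
        exact LinearMap.congr_fun h w
    have hPm : P' = maximalIdeal A := by
      by_contra hc
      exact hav P' (by rw [Set.Finite.mem_toFinset]; exact ⟨hassoc, hc⟩) hzP'
    -- the remaining case is `n = 0`, where `A ⧸ P` has no nonzero `m`-torsion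
    have hn : n = 0 := by
      subst hPm
      let _ := Ideal.Quotient.field (maximalIdeal A)
      rw [ringKrullDim_eq_zero_of_field] at hdim''
      exact_mod_cast hdim''.symm
    have hys0 : ys = [] := by
      rw [← List.length_eq_zero_iff, hys, hlen', hn]
    obtain ⟨w, hw⟩ := hπG u₀
    have hw0 : w ≠ 0 := by rintro rfl; exact hu₀ (by rw [← hw]; simp)
    subst hys0
    obtain ⟨b, hb⟩ := Ideal.Quotient.mk_surjective (I := P) w.1
    have hbP : b ∉ P := fun h => hw0 (Subtype.ext (by
      rw [← hb, Ideal.Quotient.eq_zero_iff_mem.2 h]; rfl))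
    have hPeq : P = maximalIdeal A := by
      refine le_antisymm (le_maximalIdeal hP.ne_top) fun c hc => ?_
      obtain ⟨k, hk⟩ := w.2 c hc
      rw [← hb] at hk
      have hk' : Ideal.Quotient.mk P (c ^ k * b) = 0 := hk
      rw [Ideal.Quotient.eq_zero_iff_mem] at hk'
      exact hP.mem_of_pow_mem k ((hP.mem_or_mem hk').resolve_right hbP)
    subst hPeq
    let _ := Ideal.Quotient.field (maximalIdeal A)
    rw [ringKrullDim_eq_zero_of_field] at hdim
    exact absurd hdim (by exact_mod_cast (Nat.succ_ne_zero n).symm)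

end NonVanishing

/-! ### Elements with annihilator of maximal coheight -/

section MainA
variable {A : Type u} [CommRing A] [IsLocalRing A] [IsNoetherianRing A]
  [IsAdicComplete (maximalIdeal A) A]
variable {E : Type u} [AddCommGroup E] [Module A E] {v : E}

/-- The connecting correspondence from the `m`-torsion of `TB` to `L_z TD`, for an exact sequence
`TD → TA → TB`: `h` corresponds to `d / z ^ r` if `z ^ r u` is the image of `d` for a lift `u` of
`h`. -/
def connect {TD TA TB : Type u} [AddCommGroup TD] [Module A TD] [AddCommGroup TA] [Module A TA]
    [AddCommGroup TB] [Module A TB] (z : A) (φ : TD →ₗ[A] TA) (ψ : TA →ₗ[A] TB) :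
    Submodule A (TB × Lq z TD) where
  carrier := {p | ∃ u d r, ψ u = p.1 ∧ z ^ r • u = φ d ∧ p.2 = frac z r d}
  zero_mem' := ⟨0, 0, 0, by simp, by simp, by simp⟩
  add_mem' := by
    rintro ⟨_, _⟩ ⟨_, _⟩ ⟨u, d, r, rfl, h1, rfl⟩ ⟨u', d', r', rfl, h1', rfl⟩
    refine ⟨u + u', z ^ r' • d + z ^ r • d', r + r', by simp, ?_, ?_⟩
    · rw [map_add, map_smul, map_smul, ← h1, ← h1', smul_smul, smul_smul, ← pow_add, ← pow_add,
        smul_add, add_comm r' r]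
    · rw [map_add, frac_add, add_comm r r', frac_add]
      rfl
  smul_mem' := by
    rintro c ⟨_, _⟩ ⟨u, d, r, rfl, h1, rfl⟩
    exact ⟨c • u, c • d, r, by simp, by rw [smul_comm, h1, map_smul], by simp⟩

/-- If `c` is annihilated exactly by a prime `P` of maximal coheight, then multiplication by `c`
on the top module `T xs A` is nonzero. -/
lemma not_kills_of_dim (hE : IsHull (A := A) E v) (c : A) (P : Ideal A) [hP : P.IsPrime]
    (hc : ∀ a, a ∈ P ↔ a * c = 0) (xs : List A) (hdim : ringKrullDim (A ⧸ P) = xs.length)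
    (hxs : ∀ x ∈ xs, x ∈ maximalIdeal A)
    (hm : maximalIdeal A ≤ (Ideal.span {x | x ∈ xs}).radical) :
    ¬ Kills c (T xs (ModuleCat.of A A)) := by
  intro hK
  rcases List.eq_nil_or_concat xs with rfl | ⟨xs', x, hxs'⟩
  · have h1 : c • (1 : A) = 0 := hK (1 : A)
    refine hP.ne_top ((Ideal.eq_top_iff_one P).2 ((hc 1).2 ?_))
    rw [one_mul]; simpa using h1
  rw [List.concat_eq_append] at hxs'
  subst hxs'
  have hx : x ∈ maximalIdeal A := hxs x (by simp)
  set B := ModuleCat.of A (A ⧸ Ideal.span {c}) with hB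
  obtain ⟨ys, hys, hysm, hFR, hspan, htr⟩ := choose_FR ⊥ B
      (fun a ha => by rw [Ideal.mem_bot.1 ha]; exact fun u => zero_smul A u) x hx xs' []
      (fun x hx => hxs x (by simp [hx])) (by simpa using hm) (by simp) trivial
  simp only [List.nil_append] at hFR hspan htr
  have hK1 := htr c _ hK
  obtain ⟨hfin, hsupp⟩ := dual_T hE ys hysm B hFR
  have hmys : maximalIdeal A ≤ (Ideal.span {x} ⊔ Ideal.span {w | w ∈ ys}).radical := by
    rw [sup_comm, ← span_append_singleton, hspan]; exact hm
  -- the exact sequence `A ⧸ P → A → A ⧸ (c)`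
  let f : (A ⧸ P) →ₗ[A] A := Submodule.liftQ P (LinearMap.toSpanSingleton A A c)
    (fun a ha => (hc a).1 ha)
  have hfmk : ∀ a : A, f (Submodule.Quotient.mk a) = a * c := fun a => rfl
  let g : A →ₗ[A] (A ⧸ Ideal.span {c}) := Submodule.mkQ _
  have hfinj : ∀ w, f w = 0 → w = 0 := by
    intro w hw
    obtain ⟨a, rfl⟩ := Submodule.mkQ_surjective _ w
    exact (Submodule.Quotient.mk_eq_zero _).2 ((hc a).2 hw)
  have hex : Function.Exact f g := by
    intro a
    rw [show g a = Submodule.Quotient.mk a from rfl, Submodule.Quotient.mk_eq_zero]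
    constructor
    · intro h
      obtain ⟨b, rfl⟩ := Ideal.mem_span_singleton'.1 h
      exact ⟨Submodule.Quotient.mk b, hfmk b⟩
    · rintro ⟨w, rfl⟩
      obtain ⟨b, rfl⟩ := Submodule.mkQ_surjective _ w
      exact Ideal.mem_span_singleton'.2 ⟨b, (hfmk b).symm⟩
  have hg : Function.Surjective g := Submodule.mkQ_surjective _
  let D := ModuleCat.of A (A ⧸ P)
  let φ : T ys D →ₗ[A] T ys (ModuleCat.of A A) := Tmap ys f
  let ψ : T ys (ModuleCat.of A A) →ₗ[A] T ys B := Tmap ys g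
  have hψ : Function.Surjective ψ := Tmap_surj ys hg
  have hexT : Function.Exact φ ψ := Tmap_exact ys hex hg
  have hker : ∀ d, φ d = 0 → MT (A := A) d := Tmap_ker_mt (N := D)
    (M := ModuleCat.of A A) (B := B) ys f g hex hg
    (fun (w : A ⧸ P) hw => by rw [hfinj w hw]; exact (Gam A (A ⧸ P)).zero_mem) hFR
  have hL0 : ∀ (r : ℕ) (d : T ys D), frac x r (φ d) = 0 := by
    intro r d
    let p : A →ₗ[A] (A ⧸ P) := Submodule.mkQ P
    obtain ⟨e, rfl⟩ := Tmap_surj ys (M := ModuleCat.of A A) (N := D) (f := p)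
      (Submodule.mkQ_surjective P) d
    have h1 : φ (Tmap ys (M := ModuleCat.of A A) (N := D) p e) = c • e := by
      have h2 : f.comp p = c • LinearMap.id := LinearMap.ext fun a => by
        change a * c = c * a
        exact mul_comm _ _
      change (Tmap ys (M := D) (N := ModuleCat.of A A) f) _ = _
      rw [← LinearMap.comp_apply, ← Tmap_comp (M := ModuleCat.of A A) (N := D)
        (B := ModuleCat.of A A), h2]
      exact Tmap_smul_id (M := ModuleCat.of A A) ys c e
    rw [h1, map_smul]
    rw [T_append] at hK1
    exact hK1 (frac x r e)
  set G := connect x φ ψ with hG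
  have hsnd : ∀ l : Lq x (T ys D), ∃ p ∈ G, p.2 = l := by
    intro l
    obtain ⟨r, d, rfl⟩ := frac_surj l
    obtain ⟨j, m, hj⟩ := (frac_eq_zero_iff r (φ d)).1 (hL0 r d)
    refine ⟨(ψ m, frac x r d), ⟨m, x ^ j • d, r + j, rfl, ?_, ?_⟩, rfl⟩
    · rw [map_smul, hj, add_comm]
    · rw [frac_add]
  have hfst : ∀ p ∈ G, p.1 = 0 → p = 0 := by
    rintro ⟨_, _⟩ ⟨u, d, r, rfl, h1, rfl⟩ h0
    obtain ⟨d', rfl⟩ := (hexT u).1 h0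
    obtain ⟨k, hk⟩ := hker (d - x ^ r • d') (by rw [map_sub, map_smul, h1, sub_self]) x hx
    refine Prod.ext h0 ((frac_eq_zero_iff r d).2 ⟨k, d', ?_⟩)
    rwa [smul_sub, sub_eq_zero, smul_smul, ← pow_add] at hk
  have hgam : ∀ p ∈ G, p.1 ∈ Gam A (T ys B) := by
    rintro ⟨_, _⟩ ⟨u, d, r, rfl, h1, rfl⟩
    refine T_mt ys (Ideal.span {x}) B _ ?_ hmys
    intro b hb
    obtain ⟨b, rfl⟩ := Ideal.mem_span_singleton'.1 hb
    refine ⟨r, ?_⟩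
    change (b * x) ^ r • ψ u = 0
    rw [mul_pow, mul_smul, ← map_smul, h1, hexT.apply_apply_eq_zero, smul_zero]
  -- a nonzero functional on `L_x (T ys (A ⧸ P))`
  have hmP : maximalIdeal A ≤ (P ⊔ Ideal.span {w | w ∈ ys ++ [x]}).radical := by
    rw [hspan]; exact hm.trans (Ideal.radical_mono le_sup_right)
  have hysx : ∀ y ∈ ys ++ [x], y ∈ maximalIdeal A := by
    intro y hy
    rcases List.mem_append.1 hy with h | h
    · exact hysm y h
    · rw [List.mem_singleton.1 h]; exact hx
  have hlen : (ys ++ [x]).length = (xs' ++ [x]).length := by simp [hys]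
  have hne := T_ne_zero hE _ P hdim (ys ++ [x]) hlen hysx hmP
  obtain ⟨u₀, hu₀⟩ : ∃ u : T (ys ++ [x]) D, u ≠ 0 := by
    by_contra! h
    exact hne fun u => by rw [one_smul]; exact h u
  obtain ⟨f₀, hf₀⟩ := exists_dual_ne hE (fun u : T (ys ++ [x]) D => T_mt (ys ++ [x]) P _ u
    (fun a ha => ⟨1, by
      rw [pow_one]; exact kills_T_of_kills a _ _ (kills_quot P a ha) u⟩) hmP) u₀ hu₀
  have hann := dual_torsionFree P (ys ++ [x]) (by rw [hdim, hlen]) hysx hmP f₀ hf₀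
  obtain ⟨f₁, hann₁⟩ : ∃ f₁ : Lq x (T ys D) →ₗ[A] E, ∀ a, a ∈ P ↔ a • f₁ = 0 := by
    clear hf₀ hne
    revert f₀ u₀
    rw [T_append]
    intro u₀ _ f₀ h
    exact ⟨f₀, h⟩
  let ι : G →ₗ[A] Gam A (T ys B) :=
    LinearMap.codRestrict _ ((LinearMap.fst A _ _).comp G.subtype) (fun p => hgam p.1 p.2)
  have hι : Function.Injective ι := by
    rw [injective_iff_map_eq_zero]
    intro p hp
    exact Subtype.ext (hfst p.1 p.2 (congrArg Subtype.val hp))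
  obtain ⟨F, hF⟩ := hE.inj.out ι hι (f₁.comp ((LinearMap.snd A _ _).comp G.subtype))
  have hPsupp : (⟨P, hP⟩ : PrimeSpectrum A) ∈ Module.support A (Gam A (T ys B) →ₗ[A] E) := by
    refine Module.mem_support_iff_exists_annihilator.2 ⟨F, fun a ha => (hann₁ a).2 ?_⟩
    rw [Submodule.mem_annihilator_span_singleton] at ha
    refine LinearMap.ext fun l => ?_
    obtain ⟨p, hp, rfl⟩ := hsnd l
    have h1 : F (ι ⟨p, hp⟩) = f₁ p.2 := hF ⟨p, hp⟩
    rw [LinearMap.smul_apply, ← h1, ← LinearMap.smul_apply, ha]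
    rfl
  have hrad : maximalIdeal A ≤ (P ⊔ Ideal.span {w | w ∈ ys}).radical := by
    rw [Ideal.radical_eq_sInf]
    refine le_sInf ?_
    rintro q ⟨hle, hq⟩
    refine (hsupp ⟨q, hq⟩ (Module.mem_support_mono (p := ⟨P, hP⟩) (le_sup_left.trans hle) hPsupp)
      fun y hy => hle (Ideal.mem_sup_right (Ideal.subset_span hy))).ge
  have := dim_le_of_rad ys hysm P hrad
  rw [hdim, hys, List.length_append, List.length_singleton] at this
  have h2 : xs'.length + 1 ≤ xs'.length := by exact_mod_cast this
  omega

end MainA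

/-! ### Chevalley's theorem and the complete case -/

section Complete
variable {A : Type u} [CommRing A] [IsLocalRing A] [IsNoetherianRing A]

/-- A decreasing sequence of ideals stabilises modulo each power of the maximal ideal. -/
lemma stab_mod_pow (J : ℕ → Ideal A) (hJ : Antitone J) (k : ℕ) :
    ∃ s, ∀ n ≥ s, J n ⊔ maximalIdeal A ^ k = J s ⊔ maximalIdeal A ^ k := by
  rcases Nat.eq_zero_or_pos k with rfl | hk
  · exact ⟨0, fun n _ => by simp⟩
  have hmp : maximalIdeal A ∈ (maximalIdeal A ^ k).minimalPrimes := by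
    refine ⟨⟨inferInstance, Ideal.pow_le_self hk.ne'⟩, fun q hq _ => ?_⟩
    exact hq.1.le_of_pow_le hq.2
  have hart : IsArtinianRing (A ⧸ maximalIdeal A ^ k) :=
    IsLocalRing.quotient_artinian_of_mem_minimalPrimes_of_isLocalRing _ hmp
  let f : ℕ →o (Ideal (A ⧸ maximalIdeal A ^ k))ᵒᵈ :=
    ⟨fun n => OrderDual.toDual ((J n).map (Ideal.Quotient.mk _)), fun a b h =>
      Ideal.map_mono (hJ h)⟩
  obtain ⟨s, hs⟩ := IsArtinian.monotone_stabilizes f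
  refine ⟨s, fun n hn => ?_⟩
  have h1 : (J s).map (Ideal.Quotient.mk (maximalIdeal A ^ k)) = (J n).map (Ideal.Quotient.mk _) :=
    hs n hn
  have h2 := congrArg (Ideal.comap (Ideal.Quotient.mk (maximalIdeal A ^ k))) h1
  rw [Ideal.comap_map_of_surjective _ Ideal.Quotient.mk_surjective,
    Ideal.comap_map_of_surjective _ Ideal.Quotient.mk_surjective, ← RingHom.ker_eq_comap_bot,
    Ideal.mk_ker] at h2
  exact h2.symm

/-- **Chevalley's theorem**: in a complete local ring, a decreasing sequence of open ideals with
zero intersection is finer than the adic topology. -/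
lemma chevalley [IsAdicComplete (maximalIdeal A) A] (J : ℕ → Ideal A) (hJ : Antitone J)
    (ho : ∀ n, ∃ e, maximalIdeal A ^ e ≤ J n) (h0 : ∀ a, (∀ n, a ∈ J n) → a = 0) (k : ℕ) :
    ∃ n, J n ≤ maximalIdeal A ^ k := by
  by_contra! hk
  choose s hs using stab_mod_pow J hJ
  have hmem : ∀ j n, ∀ a ∈ J (s j) ⊔ maximalIdeal A ^ j, a ∈ J n ⊔ maximalIdeal A ^ j := by
    intro j n a ha
    rw [← hs j (max n (s j)) (le_max_right _ _)] at ha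
    exact sup_le_sup_right (hJ (le_max_left _ _)) _ ha
  have hstep : ∀ (j : ℕ) (a : A), a ∈ J (s j) ⊔ maximalIdeal A ^ j →
      ∃ b ∈ J (s (j + 1)) ⊔ maximalIdeal A ^ (j + 1), b - a ∈ maximalIdeal A ^ j := by
    intro j a ha
    obtain ⟨b, hb, c, hc, rfl⟩ := Submodule.mem_sup.1 (hmem j (s (j + 1)) a ha)
    exact ⟨b, Ideal.mem_sup_left hb, by simpa using hc⟩
  obtain ⟨a₀, ha₀, ha₀k⟩ := SetLike.not_le_iff_exists.1 (hk (s k))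
  choose! φ hφ1 hφ2 using hstep
  let a : ℕ → A := fun j => Nat.rec a₀ (fun i b => φ (k + i) b) j
  have ha : ∀ j, a j ∈ J (s (k + j)) ⊔ maximalIdeal A ^ (k + j) := by
    intro j
    induction j with
    | zero => exact Ideal.mem_sup_left ha₀
    | succ j ih => exact hφ1 (k + j) (a j) ih
  have hd : ∀ j, a (j + 1) - a j ∈ maximalIdeal A ^ (k + j) := fun j => hφ2 (k + j) (a j) (ha j)
  have hcau : ∀ i d, a (i + d) - a i ∈ maximalIdeal A ^ (k + i) := by
    intro i d
    induction d with
    | zero => simp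
    | succ d ih =>
      have h1 := Ideal.pow_le_pow_right (by omega : k + i ≤ k + (i + d)) (hd (i + d))
      have := add_mem h1 ih
      rwa [sub_add_sub_cancel] at this
  obtain ⟨l, hl⟩ := IsPrecomplete.prec (I := maximalIdeal A) (M := A) inferInstance (f := a) (by
    intro i j hij
    obtain ⟨d, rfl⟩ := Nat.exists_eq_add_of_le hij
    rw [SModEq.comm, SModEq.sub_mem, smul_eq_mul, Ideal.mul_top]
    exact Ideal.pow_le_pow_right (by omega) (hcau i d))
  have hl' : ∀ i, l - a i ∈ maximalIdeal A ^ i := by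
    intro i
    have := hl i
    rwa [SModEq.comm, SModEq.sub_mem, smul_eq_mul, Ideal.mul_top] at this
  have hlk : l - a₀ ∈ maximalIdeal A ^ k := by
    have h1 := hl' k
    have h2 := Ideal.pow_le_pow_right (by omega : k ≤ k + 0) (hcau 0 k)
    rw [zero_add] at h2
    have := add_mem h1 h2
    rwa [sub_add_sub_cancel] at this
  have hl0 : l = 0 := by
    refine h0 l fun n => ?_
    obtain ⟨e, he⟩ := ho n
    have h1 := hmem _ n _ (ha e)
    have h2 : maximalIdeal A ^ (k + e) ≤ J n := (Ideal.pow_le_pow_right (by omega)).trans he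
    rw [sup_eq_left.2 h2] at h1
    have := add_mem (he (hl' e)) h1
    rwa [sub_add_cancel] at this
  rw [hl0, zero_sub, neg_mem_iff] at hlk
  exact ha₀k hlk

/-- `limJ xs n` is the kernel of `a ↦ a / (x₁⋯x_t)ⁿ` into `T xs A`; it is the limit closure of
`x₁ⁿ, …, x_tⁿ`. -/
noncomputable def limJ {A : Type u} [CommRing A] (xs : List A) (n : ℕ) : Ideal A :=
  LinearMap.ker (ee xs (M := ModuleCat.of A A) n)

lemma mem_limJ {A : Type u} [CommRing A] (xs : List A) (n : ℕ) (a : A) :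
    a ∈ limJ xs n ↔ ∃ k, xs.prod ^ k * a ∈ pw xs (n + k) := by
  have h := ee_eq_zero_iff xs (M := ModuleCat.of A A) n a
  have h2 : ∀ k, (pw xs k • ⊤ : Submodule A A) = pw xs k := fun k => by
    rw [smul_eq_mul, Ideal.mul_top]
  refine h.trans (exists_congr fun k => ?_)
  change xs.prod ^ k * a ∈ (pw xs (n + k) • ⊤ : Submodule A A) ↔ _
  rw [h2]

lemma limJ_antitone {A : Type u} [CommRing A] (xs : List A) : Antitone (limJ xs) := by
  refine antitone_nat_of_succ_le fun n a ha => ?_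
  rw [mem_limJ] at ha ⊢
  obtain ⟨k, hk⟩ := ha
  refine ⟨k + 1, ?_⟩
  rw [pow_succ', mul_assoc, show n + (k + 1) = n + 1 + k by ring]
  exact Ideal.mul_mem_left _ _ hk

lemma pw_le_limJ {A : Type u} [CommRing A] (xs : List A) (n : ℕ) : pw xs n ≤ limJ xs n :=
  fun a ha => (mem_limJ xs n a).2 ⟨0, by simpa using ha⟩

lemma exists_pow_le_pw (xs : List A) (hm : maximalIdeal A ≤ (Ideal.span {x | x ∈ xs}).radical)
    (n : ℕ) : ∃ e, maximalIdeal A ^ e ≤ pw xs n := by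
  have h : maximalIdeal A ≤ (pw xs n).radical := by
    refine hm.trans ((Ideal.radical_isRadical _).radical_le_iff.2 (Ideal.span_le.2 fun x hx => ?_))
    exact ⟨n, Ideal.subset_span ⟨x, hx, rfl⟩⟩
  exact Ideal.exists_pow_le_of_le_radical_of_fg h (IsNoetherian.noetherian _)

/-- Membership in all the ideals `limJ xs n` means annihilating `T xs A`. -/
lemma kills_iff_mem_limJ {A : Type u} [CommRing A] (xs : List A) (c : A) :
    Kills c (T xs (ModuleCat.of A A)) ↔ ∀ n, c ∈ limJ xs n := by
  constructor
  · intro h n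
    have h1 : ee xs (M := ModuleCat.of A A) n (c • (1 : A)) = 0 := by
      rw [map_smul]; exact h _
    rw [smul_eq_mul, mul_one] at h1
    exact h1
  · intro h u
    obtain ⟨n, hn⟩ := ee_surj_ge xs u
    obtain ⟨a, rfl⟩ := hn n le_rfl
    have h1 : (a : A) • ee xs (M := ModuleCat.of A A) n c = 0 := by
      rw [show ee xs (M := ModuleCat.of A A) n c = 0 from h n, smul_zero]
    rw [← map_smul] at h1 ⊢
    have h2 : (c : A) • (a : A) = (a : A) • (c : A) := mul_comm c a
    exact (congrArg (ee xs (M := ModuleCat.of A A) n) h2).trans h1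

/-- For a complete local ring all of whose associated primes have coheight `t`, the ideals
`limJ xs n` of a system of parameters have zero intersection. -/
lemma limJ_inter [IsAdicComplete (maximalIdeal A) A] (xs : List A)
    (hxs : ∀ x ∈ xs, x ∈ maximalIdeal A)
    (hm : maximalIdeal A ≤ (Ideal.span {x | x ∈ xs}).radical)
    (hun : ∀ P ∈ associatedPrimes A A, ringKrullDim (A ⧸ P) = xs.length)
    (a : A) (ha : ∀ n, a ∈ limJ xs n) : a = 0 := by
  by_contra hne
  obtain ⟨E, v, h1, h2, h3, h4⟩ := exists_hull (A := A)
  have hE : IsHull (A := A) E v := ⟨h1, h2, h3, h4⟩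
  let K : Ideal A := ⨅ n, limJ xs n
  have hK : ∀ c ∈ K, Kills c (T xs (ModuleCat.of A A)) := fun c hc =>
    (kills_iff_mem_limJ xs c).2 ((Submodule.mem_iInf _).1 hc)
  have hnt : Nontrivial K :=
    ⟨⟨⟨a, (Submodule.mem_iInf _).2 ha⟩, 0, fun h => hne (congrArg Subtype.val h)⟩⟩
  obtain ⟨P, hP⟩ := associatedPrimes.nonempty A K
  have hPA := associatedPrimes.subset_of_injective K.injective_subtype hP
  obtain ⟨hPp, ⟨c, hc⟩, hPc⟩ := assoc_iff.1 hP
  refine not_kills_of_dim hE c P (fun b => (hPc b).trans ?_) xs (hun P hPA) hxs hm (hK c hc)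
  exact ⟨fun h => congrArg Subtype.val h, fun h => Subtype.ext h⟩

/-- An element with annihilator of coheight less than `t` lies in every `limJ xs n`. -/
lemma mem_limJ_of_dim_lt (xs : List A) (hxs : ∀ x ∈ xs, x ∈ maximalIdeal A)
    (hm : maximalIdeal A ≤ (Ideal.span {x | x ∈ xs}).radical) (P : Ideal A)
    (hP : ringKrullDim (A ⧸ P) < xs.length) (c : A) (hc : ∀ a ∈ P, a * c = 0) (n : ℕ) :
    c ∈ limJ xs n := by
  have h := T_vanish xs P hP hxs (hm.trans (Ideal.radical_mono le_sup_right))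
  let f : (A ⧸ P) →ₗ[A] A := Submodule.liftQ P (LinearMap.toSpanSingleton A A c) hc
  have h1 := (kills_T_iff _ _ _).1 h n (Submodule.Quotient.mk (1 : A) : A ⧸ P)
  obtain ⟨k, hk⟩ := h1
  have hk' : xs.prod ^ k • (Submodule.Quotient.mk (1 : A) : A ⧸ P) ∈
      (pw xs (n + k) • ⊤ : Submodule A (A ⧸ P)) := by
    rwa [one_smul] at hk
  have h2 := Submodule.mem_map_of_mem (f := f) hk'
  rw [Submodule.map_smul'', map_smul] at h2
  rw [mem_limJ]
  refine ⟨k, ?_⟩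
  have h3 := Submodule.smul_mono (le_refl (pw xs (n + k))) (le_top (a := Submodule.map f ⊤)) h2
  rw [smul_eq_mul, smul_eq_mul, Ideal.mul_top] at h3
  have h4 : f (Submodule.Quotient.mk (1 : A)) = c := one_mul c
  rwa [h4] at h3
end Complete

/-! ### Completion -/

section Completion

/-- Sending variables to generators of `I` exhibits the completion as a quotient of the power
series ring, the completion of a polynomial ring at the ideal of its variables. -/
lemma isNoetherianRing_adicCompletion {R : Type*} [CommRing R] [IsNoetherianRing R] (I : Ideal R) :
    IsNoetherianRing (AdicCompletion I R) := by
  have hfg : I.FG := IsNoetherian.noetherian I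
  obtain ⟨n, s, hs⟩ := Submodule.fg_iff_exists_fin_generating_family.1 hfg
  let J := MvPolynomial.idealOfVars (Fin n) R
  have hJfg : J.FG := MvPolynomial.idealOfVars_fg _ _
  let ev : MvPolynomial (Fin n) R →+* R := (MvPolynomial.aeval s).toRingHom
  have hJ : J.map ev = I := by
    change (Ideal.span _).map ev = I
    rw [Ideal.map_span, ← Set.range_comp]
    have : (ev ∘ MvPolynomial.X) = s := by
      ext i; exact MvPolynomial.aeval_X s i
    rw [this]; exact hs
  have hpow : ∀ k, J ^ k ≤ (I ^ k).comap ev := fun k => by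
    rw [← Ideal.map_le_iff_le_comap, Ideal.map_pow, hJ]
  have hS : IsNoetherianRing (AdicCompletion J (MvPolynomial (Fin n) R)) :=
    isNoetherianRing_of_ringEquiv (MvPowerSeries (Fin n) R)
      (MvPowerSeries.toAdicCompletionAlgEquiv (Fin n) R).toRingEquiv
  let g : ∀ k, AdicCompletion J (MvPolynomial (Fin n) R) →+* R ⧸ I ^ k := fun k =>
    (Ideal.quotientMap (I ^ k) ev (hpow k)).comp (AdicCompletion.evalₐ J k).toRingHom
  have hg : ∀ k p, g k (algebraMap _ _ p) = Ideal.Quotient.mk (I ^ k) (ev p) := by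
    intro k p
    rfl
  have hgc : ∀ {m k : ℕ} (hle : m ≤ k), (Ideal.Quotient.factorPow I hle).comp (g k) = g m := by
    intro m k hle
    refine RingHom.ext fun p => ?_
    induction p using AdicCompletion.induction_on with
    | _ a =>
      have h1 : ∀ j, g j (AdicCompletion.mk J _ a) = Ideal.Quotient.mk (I ^ j) (ev (a j)) := by
        intro j
        exact congrArg (Ideal.quotientMap (I ^ j) ev (hpow j)) (AdicCompletion.evalₐ_mk J j a)
      rw [RingHom.comp_apply, h1, h1]
      change Ideal.Quotient.mk (I ^ m) (ev (a k)) = _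
      have h2 := AdicCompletion.Ideal.mk_eq_mk J hle a
      rw [Ideal.Quotient.eq] at h2 ⊢
      rw [← map_sub]
      exact hpow m h2
  let F := AdicCompletion.liftRingHom I g hgc
  have hF : ∀ p, F (algebraMap _ _ p) = algebraMap R (AdicCompletion I R) (ev p) := by
    intro p
    refine AdicCompletion.ext_evalₐ fun k => ?_
    rw [AdicCompletion.evalₐ_liftRingHom, hg]
    rfl
  let J' := J.map (algebraMap _ (AdicCompletion J (MvPolynomial (Fin n) R)))
  have hJ' : J'.map F = I.map (algebraMap R (AdicCompletion I R)) := by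
    have h1 : F.comp (algebraMap _ _) = (algebraMap R (AdicCompletion I R)).comp ev :=
      RingHom.ext hF
    rw [Ideal.map_map, h1, ← Ideal.map_map, hJ]
  have h1 : IsAdicComplete J' (AdicCompletion J (MvPolynomial (Fin n) R)) :=
    AdicCompletion.isAdicComplete_self J hJfg
  have h2 : IsHausdorff (J'.map F) (AdicCompletion I R) := by
    rw [hJ']
    exact (AdicCompletion.isAdicComplete_self I hfg).toIsHausdorff
  refine isNoetherianRing_of_surjective _ _ F
    (surjective_of_mk_map_comp_surjective (I := J') F ?_)
  intro y
  obtain ⟨a, rfl⟩ := Ideal.Quotient.mk_surjective y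
  obtain ⟨r, hr⟩ := Ideal.Quotient.mk_surjective (AdicCompletion.evalOneₐ I a)
  refine ⟨algebraMap (MvPolynomial (Fin n) R) (AdicCompletion J (MvPolynomial (Fin n) R))
    (MvPolynomial.C r), ?_⟩
  rw [RingHom.comp_apply, hF, Ideal.Quotient.eq, hJ', ← AdicCompletion.ker_evalOneₐ_eq_map I hfg,
    RingHom.mem_ker, map_sub, sub_eq_zero]
  have : ev (MvPolynomial.C r) = r := MvPolynomial.aeval_C s r
  rw [this]
  exact hr

variable {R : Type u} [CommRing R] [IsNoetherianRing R] [IsLocalRing R]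

/-- Elements of the completion are approximated by elements of `R`. -/
lemma completion_approx (a : AdicCompletion (maximalIdeal R) R) (N : ℕ) :
    ∃ r : R, a - algebraMap R (AdicCompletion (maximalIdeal R) R) r ∈
      maximalIdeal (AdicCompletion (maximalIdeal R) R) ^ N := by
  have hfg : (maximalIdeal R).FG := IsNoetherian.noetherian _
  obtain ⟨r, hr⟩ := Submodule.Quotient.mk_surjective _ (a.val N)
  refine ⟨r, ?_⟩
  rw [AdicCompletion.maximalIdeal_eq_map, ← Ideal.map_pow, ← Submodule.restrictScalars_mem R,
    ← Ideal.smul_top_eq_map, AdicCompletion.pow_smul_top_eq_ker_eval hfg]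
  rw [LinearMap.mem_ker, map_sub, sub_eq_zero]
  exact hr.symm

instance completion_faithfullyFlat : Module.FaithfullyFlat R (AdicCompletion (maximalIdeal R) R) :=
  Module.FaithfullyFlat.of_flat_of_isLocalHom

/-- Chains of primes of `R` lift to the completion by going down along the faithfully flat map. -/
lemma dim_le_completion : ringKrullDim R ≤ ringKrullDim (AdicCompletion (maximalIdeal R) R) := by
  refine iSup_le fun l => ?_
  obtain ⟨P, hP⟩ := PrimeSpectrum.comap_surjective_of_faithfullyFlat (A := R)
    (B := AdicCompletion (maximalIdeal R) R) l.last
  have : P.asIdeal.LiesOver l.last.asIdeal := ⟨by rw [← hP]; rfl⟩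
  obtain ⟨L, hL, -⟩ := Ideal.exists_ltSeries_of_hasGoingDown
    (S := AdicCompletion (maximalIdeal R) R) l P.asIdeal
  rw [← hL]
  exact Order.LTSeries.length_le_krullDim L

lemma pw_map {S : Type*} [CommRing S] (φ : R →+* S) (xs : List R) (k : ℕ) :
    pw (xs.map φ) k = (pw xs k).map φ := by
  unfold pw
  rw [Ideal.map_span]
  congr 1
  ext z
  simp [Set.mem_image]

/-- The ideals `limJ` of the completion contract to those of `R`, by faithful flatness. -/
lemma mem_limJ_completion (xs : List R) (n : ℕ) (r : R) :
    algebraMap R (AdicCompletion (maximalIdeal R) R) r ∈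
      limJ (xs.map (algebraMap R (AdicCompletion (maximalIdeal R) R))) n ↔ r ∈ limJ xs n := by
  rw [mem_limJ, mem_limJ]
  refine exists_congr fun k => ?_
  rw [pw_map, ← map_list_prod, ← map_pow, ← map_mul, ← Ideal.mem_comap,
    Ideal.comap_map_eq_self_of_faithfullyFlat]

end Completion

/-- The limit closure of `x₁ⁿ⁺¹, …, x_tⁿ⁺¹`, a union over exponents divisible by `n + 1`, is the
ideal `limJ`, a union over all exponents: the union is increasing, so the former are cofinal. -/
lemma limJ_ofFn {R : Type u} [CommRing R] {t : ℕ} (x : Fin t → R) (n : ℕ) :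
    limitClosure (M := R) (fun i => x i ^ (n + 1)) = limJ (List.ofFn x) (n + 1) := by
  have key : ∀ (k : ℕ) (a : R),
      a ∈ ((Ideal.span (Set.range fun i => (x i ^ (n + 1)) ^ (k + 2)) •
        (⊤ : Submodule R R)).comap (LinearMap.lsmul R R ((∏ i, x i ^ (n + 1)) ^ (k + 1)))) ↔
      (List.ofFn x).prod ^ ((n + 1) * (k + 1)) * a ∈
        pw (List.ofFn x) (n + 1 + (n + 1) * (k + 1)) := by
    intro k a
    rw [Submodule.mem_comap, smul_eq_mul, Ideal.mul_top, LinearMap.lsmul_apply, smul_eq_mul,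
      List.prod_ofFn, Finset.prod_pow, ← pow_mul]
    have : pw (List.ofFn x) (n + 1 + (n + 1) * (k + 1)) =
        Ideal.span (Set.range fun i => (x i ^ (n + 1)) ^ (k + 2)) := by
      unfold pw
      congr 1
      ext z
      simp only [Set.mem_image, Set.mem_range, Set.mem_ofPred_eq, List.mem_ofFn', ← pow_mul,
        exists_exists_eq_and]
      rw [show n + 1 + (n + 1) * (k + 1) = (n + 1) * (k + 2) by ring]
    rw [this]
  apply le_antisymm
  · refine iSup_le fun k a ha => ?_
    exact (mem_limJ _ _ _).2 ⟨_, (key k a).1 ha⟩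
  · intro a ha
    obtain ⟨k, hk⟩ := (mem_limJ _ _ _).1 ha
    refine (le_iSup (fun k : ℕ => ((Ideal.span (Set.range fun i => (x i ^ (n + 1)) ^ (k + 2)) •
        (⊤ : Submodule R R)).comap (LinearMap.lsmul R R ((∏ i, x i ^ (n + 1)) ^ (k + 1))))) k)
      ((key k a).2 ?_)
    have hle : k ≤ (n + 1) * (k + 1) := by nlinarith
    obtain ⟨d, hd⟩ := Nat.exists_eq_add_of_le hle
    have h1 := prod_pow_smul_mem (M := ModuleCat.of R R) (List.ofFn x) (n + 1 + k) d
      ((List.ofFn x).prod ^ k * a) (by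
        change _ ∈ (pw (List.ofFn x) (n + 1 + k) • ⊤ : Submodule R R)
        rwa [smul_eq_mul, Ideal.mul_top])
    change _ ∈ (pw (List.ofFn x) (n + 1 + k + d) • ⊤ : Submodule R R) at h1
    rw [smul_eq_mul, Ideal.mul_top] at h1
    rw [hd, pow_add, mul_comm (_ ^ k), mul_assoc, ← add_assoc]
    exact h1

/-- **Theorem D**: a Noetherian local ring `(R, m)` of dimension `t` is unmixed if and only
if, for any system of parameters `x = x₁, …, x_t`, the `m`-adic topology coincides with the
topology defined by the family `{(x₁^n, …, x_t^n)^lim}_{n ≥ 1}`; since the `m`-adic topology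
is always finer, this says: for every `k` there is `n ≥ 1` with
`(x₁^n, …, x_t^n)^lim ⊆ m^k`. -/
theorem unmixed_iff_limitClosure_topology_eq_adic
    {R : Type*} [CommRing R] [IsNoetherianRing R] [IsLocalRing R]
    {t : ℕ} (hdim : ringKrullDim R = t)
    (x : Fin t → R) (hx : IsSOP R x) :
    IsUnmixedLocalRing R ↔
      ∀ k : ℕ, ∃ n : ℕ,
        limitClosure (M := R) (fun i => x i ^ (n + 1)) ≤ maximalIdeal R ^ k := by
  let A := AdicCompletion (maximalIdeal R) R
  let φ : R →+* A := algebraMap R A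
  have hN : IsNoetherianRing A := isNoetherianRing_adicCompletion _
  have hmax : maximalIdeal A = (maximalIdeal R).map φ := AdicCompletion.maximalIdeal_eq_map
  obtain ⟨hxm, hxr⟩ := hx
  let ys : List A := (List.ofFn x).map φ
  have hlen : ys.length = t := by simp [ys]
  have hys : ∀ y ∈ ys, y ∈ maximalIdeal A := by
    intro y hy
    obtain ⟨z, hz, rfl⟩ := List.mem_map.1 hy
    obtain ⟨i, rfl⟩ := (List.mem_ofFn' _ _).1 hz
    rw [hmax]
    exact Ideal.mem_map_of_mem φ (hxm i)
  have hm : maximalIdeal A ≤ (Ideal.span {y | y ∈ ys}).radical := by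
    rw [hmax, Ideal.map_le_iff_le_comap]
    intro r hr
    obtain ⟨k, hk⟩ := hxr.ge hr
    refine Ideal.mem_comap.2 ⟨k, ?_⟩
    rw [← map_pow]
    refine (Ideal.map_le_iff_le_comap.2 (Ideal.span_le.2 ?_)) (Ideal.mem_map_of_mem φ hk)
    rintro _ ⟨i, rfl⟩
    exact Ideal.subset_span (List.mem_map.2 ⟨x i, (List.mem_ofFn' _ _).2 ⟨i, rfl⟩, rfl⟩)
  have hdimA : ringKrullDim A = t := by
    refine le_antisymm ?_ (hdim ▸ dim_le_completion)
    have h1 := dim_le_of_rad ys hys ⊥ (hm.trans (Ideal.radical_mono le_sup_right))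
    rwa [hlen, ringKrullDim_eq_of_ringEquiv (RingEquiv.quotientBot A)] at h1
  have hopen : ∀ n, ∃ e, maximalIdeal A ^ e ≤ limJ ys n := by
    intro n
    obtain ⟨e, he⟩ := exists_pow_le_pw ys hm n
    exact ⟨e, he.trans (pw_le_limJ ys n)⟩
  constructor
  · intro hun k
    obtain ⟨n, hn⟩ := chevalley (limJ ys) (limJ_antitone ys) hopen
      (limJ_inter ys hys hm fun P hP => by rw [hlen, ← hdimA]; exact hun P hP) k
    refine ⟨n, ?_⟩
    rw [limJ_ofFn]
    intro r hr
    have h1 := hn (limJ_antitone ys n.le_succ ((mem_limJ_completion _ _ r).2 hr))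
    rw [hmax, ← Ideal.map_pow, ← Ideal.mem_comap,
      Ideal.comap_map_eq_self_of_faithfullyFlat] at h1
    exact h1
  · intro htop P hP
    by_contra hne
    have hlt : ringKrullDim (A ⧸ P) < ys.length := by
      rw [hlen, ← hdimA]
      exact lt_of_le_of_ne (ringKrullDim_quotient_le P) hne
    obtain ⟨hPp, c, hc⟩ := assoc_iff.1 hP
    have hcJ := mem_limJ_of_dim_lt ys hys hm P hlt c fun a ha => (hc a).1 ha
    have hc0 : c = 0 := by
      have h0 : c ∈ ⨅ k : ℕ, maximalIdeal A ^ k := by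
        refine (Submodule.mem_iInf _).2 fun k => ?_
        obtain ⟨n, hn⟩ := htop k
        rw [limJ_ofFn] at hn
        obtain ⟨e, he⟩ := hopen (n + 1)
        -- approximate `c` so closely that the approximation stays in the open ideal `limJ`
        obtain ⟨r, hr⟩ := completion_approx c (max e k)
        have h1 : φ r ∈ limJ ys (n + 1) := by
          have := sub_mem (hcJ (n + 1)) (he (Ideal.pow_le_pow_right (le_max_left e k) hr))
          rwa [sub_sub_cancel] at this
        have h2 := Ideal.mem_map_of_mem φ (hn ((mem_limJ_completion _ _ r).1 h1))
        rw [Ideal.map_pow, ← hmax] at h2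
        have := add_mem (Ideal.pow_le_pow_right (le_max_right e k) hr) h2
        rwa [sub_add_cancel] at this
      rwa [Ideal.iInf_pow_eq_bot_of_isLocalRing _ (Ideal.IsPrime.ne_top inferInstance)] at h0
    refine hPp.ne_top ((Ideal.eq_top_iff_one P).2 ((hc 1).2 ?_))
    rw [hc0, smul_zero]
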